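/- arXiv:1909.05924 — 2 statements merged into one kernel-verified Lean document; each statement's English description precedes it below -/
import Mathlib

section
/- For every even m ≥ 2 and every l ≥ 1, TC^Σ_2((S^m)^l) = 2l+1 and TC^β_{2l}(S^m) = 2l+1, where S^m is the unit sphere in ℝ^{m+1} and (S^m)^l carries the product topology. -/
open unitInterval

noncomputable section

/-- The point `j/(n-1)` of the unit interval, for `j : Fin n`.
These are the `n` evaluation points `0, 1/(n-1), …, (n-2)/(n-1), 1`. -/
def evalPt (n : ℕ) (j : Fin n) : unitInterval :=
  ⟨(j : ℝ) / ((n : ℝ) - 1), by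
    have hn : 1 ≤ n := j.pos
    rcases eq_or_lt_of_le hn with h | h
    · have hn1 : n = 1 := h.symm
      subst hn1
      simp [Fin.fin_one_eq_zero j]
    · have h1 : (0 : ℝ) < (n : ℝ) - 1 := by
        have : (1 : ℝ) < (n : ℝ) := by exact_mod_cast h
        linarith
      constructor
      · exact div_nonneg (Nat.cast_nonneg _) h1.le
      · rw [div_le_one h1]
        have hj : (j : ℕ) + 1 ≤ n := j.is_lt
        have : ((j : ℕ) : ℝ) + 1 ≤ (n : ℝ) := by exact_mod_cast hj
        linarith⟩

/-- Coordinate reversal (the involution `β`) on `n`-tuples: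
`β·(x_1,…,x_n) = (x_n,…,x_1)`. -/
def rtuple {X : Type*} {n : ℕ} (x : Fin n → X) : Fin n → X := fun j => x j.rev

/-- Path reversal (the involution `β`) on the free path space `C(I,X)`:
`(β·γ)(t) = γ(1-t)`. -/
def rpath {X : Type*} [TopologicalSpace X] (γ : C(unitInterval, X)) : C(unitInterval, X) :=
  γ.comp ⟨unitInterval.symm, unitInterval.continuous_symm⟩

/-- `X^n` can be covered by `k` open sets, on each of which there is a continuous
section of the evaluation map `e_n : C(I,X) → X^n`,
`γ ↦ (γ(0), γ(1/(n-1)), …, γ(1))`. -/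
def HasPlanners (X : Type*) [TopologicalSpace X] (n k : ℕ) : Prop :=
  ∃ U : Fin k → Set (Fin n → X),
    (∀ i, IsOpen (U i)) ∧ (⋃ i, U i) = Set.univ ∧
    (∀ i, ∃ s : C(U i, C(unitInterval, X)),
      ∀ x : U i, ∀ j : Fin n, s x (evalPt n j) = (x : Fin n → X) j)

/-- The `n`-th (ordinary, higher) topological complexity `TC_n(X)`, as a value in `ℕ∞`. -/
def TCn (X : Type*) [TopologicalSpace X] (n : ℕ) : ℕ∞ :=
  sInf {k : ℕ∞ | ∃ m : ℕ, (m : ℕ∞) = k ∧ HasPlanners X n m}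

/-- `X^n` can be covered by `k` β-invariant open sets, on each of which there is a
continuous β-equivariant section of the evaluation map `e_n : C(I,X) → X^n`
(a bidirectional motion planner). -/
def HasBidirPlanners (X : Type*) [TopologicalSpace X] (n k : ℕ) : Prop :=
  ∃ U : Fin k → Set (Fin n → X),
    (∀ i, IsOpen (U i)) ∧ (⋃ i, U i) = Set.univ ∧
    (∀ i, ∀ x ∈ U i, rtuple x ∈ U i) ∧
    (∀ i, ∃ s : C(U i, C(unitInterval, X)),
      (∀ x : U i, ∀ j : Fin n, s x (evalPt n j) = (x : Fin n → X) j) ∧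
      (∀ x : U i, ∀ hx : rtuple (x : Fin n → X) ∈ U i,
        s ⟨rtuple (x : Fin n → X), hx⟩ = rpath (s x)))

/-- The `n`-th bidirectional topological complexity `TC^β_n(X)`, as a value in `ℕ∞`. -/
def TCbeta (X : Type*) [TopologicalSpace X] (n : ℕ) : ℕ∞ :=
  sInf {k : ℕ∞ | ∃ m : ℕ, (m : ℕ∞) = k ∧ HasBidirPlanners X n m}

/-- The action of a permutation `sg ∈ Σ_n` on `n`-tuples (by permuting coordinates). -/
def permTuple {X : Type*} {n : ℕ} (sg : Equiv.Perm (Fin n)) (x : Fin n → X) : Fin n → X :=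
  fun j => x (sg j)

/-- `X^n` can be covered by `k` `Σ_n`-invariant open sets, on each of which there is a
continuous `Σ_n`-equivariant section of `E_n : X^{J_n} → X^n`,
`(α_1,…,α_n) ↦ (α_1(1),…,α_n(1))`, where `X^{J_n}` is the space of `n`-tuples of paths
with a common initial point. -/
def HasSymPlanners (X : Type*) [TopologicalSpace X] (n k : ℕ) : Prop :=
  ∃ U : Fin k → Set (Fin n → X),
    (∀ i, IsOpen (U i)) ∧ (⋃ i, U i) = Set.univ ∧
    (∀ i, ∀ sg : Equiv.Perm (Fin n), ∀ x ∈ U i, permTuple sg x ∈ U i) ∧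
    (∀ i, ∃ s : C(U i, Fin n → C(unitInterval, X)),
      (∀ x : U i, ∀ j j' : Fin n, s x j 0 = s x j' 0) ∧
      (∀ x : U i, ∀ j : Fin n, s x j 1 = (x : Fin n → X) j) ∧
      (∀ x : U i, ∀ sg : Equiv.Perm (Fin n),
        ∀ hx : permTuple sg (x : Fin n → X) ∈ U i,
        s ⟨permTuple sg (x : Fin n → X), hx⟩ = permTuple sg (s x)))

/-- The `n`-th symmetrized topological complexity `TC^Σ_n(X)`, as a value in `ℕ∞`. -/
def TCsym (X : Type*) [TopologicalSpace X] (n : ℕ) : ℕ∞ :=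
  sInf {k : ℕ∞ | ∃ m : ℕ, (m : ℕ∞) = k ∧ HasSymPlanners X n m}

/-- The unit sphere `S^m ⊂ ℝ^{m+1}`. -/
abbrev Sph (m : ℕ) : Type :=
  Metric.sphere (0 : EuclideanSpace ℝ (Fin (m + 1))) 1

end


namespace SphTC

noncomputable section

open MeasureTheory Set Filter Topology unitInterval
open scoped ContDiff

set_option linter.unusedSectionVars false

section jacobian

variable {ι : Type} [Fintype ι] [DecidableEq ι]

/-- Jacobian matrix of a family of functions. -/
def jac (u : ι → (ι → ℝ) → ℝ) (x : ι → ℝ) : Matrix ι ι ℝ :=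
  fun i j => fderiv ℝ (u i) x (Pi.single j 1)

lemma contDiff_pd {u : (ι → ℝ) → ℝ} (hu : ContDiff ℝ ∞ u) (v : ι → ℝ) :
    ContDiff ℝ ∞ (fun x => fderiv ℝ u x v) :=
  (hu.fderiv_right (m := ∞) (by simp)).clm_apply contDiff_const

lemma pd_symm {u : (ι → ℝ) → ℝ} (hu : ContDiff ℝ ∞ u) (v w x : ι → ℝ) :
    fderiv ℝ (fun y => fderiv ℝ u y w) x v = fderiv ℝ (fun y => fderiv ℝ u y v) x w := by
  have hd : DifferentiableAt ℝ (fderiv ℝ u) x :=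
    ((hu.fderiv_right (m := ∞) (by simp)).differentiable (by simp)) x
  have h : ∀ w v, fderiv ℝ (fun y => fderiv ℝ u y w) x v = fderiv ℝ (fderiv ℝ u) x v w := by
    intro w v
    rw [fderiv_clm_apply hd (differentiableAt_const w)]
    simp
  rw [h, h]
  have := (hu.contDiffAt (x := x)).isSymmSndFDerivAt (by simp; exact (WithTop.coe_le_coe (b := (2:ℕ∞)) (a := ⊤)).2 le_top)
  exact this v w

lemma continuous_jac_det {u : ι → (ι → ℝ) → ℝ} (hu : ∀ i, ContDiff ℝ ∞ (u i)) :
    Continuous (fun x => (jac u x).det) := by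
  apply Continuous.matrix_det
  refine continuous_matrix (fun i j => ?_)
  exact (contDiff_pd (hu i) _).continuous

lemma sum_perm_zero {u : ι → (ι → ℝ) → ℝ} (hu : ∀ i, ContDiff ℝ ∞ (u i)) (i0 : ι)
    (x : ι → ℝ) :
    ∑ τ : Equiv.Perm ι, (Equiv.Perm.sign τ : ℝ) *
      fderiv ℝ (fun y => ∏ i ∈ Finset.univ.erase i0, fderiv ℝ (u i) y (Pi.single (τ i) 1)) x
        (Pi.single (τ i0) 1) = 0 := by
  have h1 : ∀ τ : Equiv.Perm ι,
      fderiv ℝ (fun y => ∏ i ∈ Finset.univ.erase i0, fderiv ℝ (u i) y (Pi.single (τ i) 1)) x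
        (Pi.single (τ i0) 1) = ∑ i ∈ Finset.univ.erase i0,
        (∏ j ∈ (Finset.univ.erase i0).erase i, fderiv ℝ (u j) x (Pi.single (τ j) 1)) *
        fderiv ℝ (fun y => fderiv ℝ (u i) y (Pi.single (τ i) 1)) x (Pi.single (τ i0) 1) := by
    intro τ
    rw [fderiv_finsetProd]
    · simp
    · intro i _
      exact (contDiff_pd (hu i) _).differentiable (by simp) x
  simp_rw [h1, Finset.mul_sum]
  rw [Finset.sum_comm]
  apply Finset.sum_eq_zero
  intro i hi
  have hne : i ≠ i0 := (Finset.mem_erase.1 hi).1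
  set f : Equiv.Perm ι → ℝ := fun τ => (Equiv.Perm.sign τ : ℝ) *
    ((∏ j ∈ (Finset.univ.erase i0).erase i, fderiv ℝ (u j) x (Pi.single (τ j) 1)) *
        fderiv ℝ (fun y => fderiv ℝ (u i) y (Pi.single (τ i) 1)) x (Pi.single (τ i0) 1)) with hf
  change ∑ τ, f τ = 0
  have h2 : ∑ τ, f (τ * Equiv.swap i0 i) = ∑ τ, f τ :=
    Equiv.sum_comp (Equiv.mulRight (Equiv.swap i0 i)) f
  have h3 : ∀ τ, f (τ * Equiv.swap i0 i) = - f τ := by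
    intro τ
    simp only [hf, Equiv.Perm.sign_mul, Equiv.Perm.sign_swap hne.symm, Equiv.Perm.mul_apply,
      Equiv.swap_apply_left, Equiv.swap_apply_right]
    rw [pd_symm (hu i)]
    have : ∏ j ∈ (Finset.univ.erase i0).erase i,
        fderiv ℝ (u j) x (Pi.single (τ (Equiv.swap i0 i j)) 1) =
        ∏ j ∈ (Finset.univ.erase i0).erase i, fderiv ℝ (u j) x (Pi.single (τ j) 1) := by
      apply Finset.prod_congr rfl
      intro j hj
      simp only [Finset.mem_erase] at hj
      rw [Equiv.swap_apply_of_ne_of_ne hj.2.1 hj.1]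
    rw [this]
    push_cast
    ring
  simp_rw [h3] at h2
  rw [Finset.sum_neg_distrib] at h2
  linarith

lemma integral_det_zero {u : ι → (ι → ℝ) → ℝ} (hu : ∀ i, ContDiff ℝ ∞ (u i)) (i0 : ι)
    (hc : HasCompactSupport (u i0)) : ∫ x, (jac u x).det = 0 := by
  set G : Equiv.Perm ι → (ι → ℝ) → ℝ := fun τ y =>
    ∏ i ∈ Finset.univ.erase i0, fderiv ℝ (u i) y (Pi.single (τ i) 1) with hG
  have hGs : ∀ τ, ContDiff ℝ ∞ (G τ) := fun τ =>
    contDiff_prod (fun i _ => contDiff_pd (hu i) _)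
  have hdet : ∀ x, (jac u x).det = ∑ τ : Equiv.Perm ι, (Equiv.Perm.sign τ : ℝ) *
      (G τ x * fderiv ℝ (u i0) x (Pi.single (τ i0) 1)) := by
    intro x
    rw [← Matrix.det_transpose, Matrix.det_apply']
    apply Finset.sum_congr rfl
    intro τ _
    congr 1
    rw [← Finset.mul_prod_erase Finset.univ _ (Finset.mem_univ i0), mul_comm]
    rfl
  have hcs : ∀ v, HasCompactSupport (fun x => fderiv ℝ (u i0) x v) := fun v =>
    hc.fderiv_apply (𝕜 := ℝ) v
  have hi1 : ∀ τ, Integrable (fun x => G τ x * fderiv ℝ (u i0) x (Pi.single (τ i0) 1)) := by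
    intro τ
    exact ((hGs τ).continuous.mul (contDiff_pd (hu i0) _).continuous).integrable_of_hasCompactSupport
      ((hcs _).mul_left)
  have hi2 : ∀ τ, Integrable (fun x => fderiv ℝ (G τ) x (Pi.single (τ i0) 1) * u i0 x) := by
    intro τ
    exact ((contDiff_pd (hGs τ) _).continuous.mul (hu i0).continuous).integrable_of_hasCompactSupport
      (hc.mul_left)
  have hi3 : ∀ τ, Integrable (fun x => G τ x * u i0 x) := by
    intro τ
    exact ((hGs τ).continuous.mul (hu i0).continuous).integrable_of_hasCompactSupport
      (hc.mul_left)
  simp_rw [hdet]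
  rw [integral_finsetSum _ (fun τ _ => (hi1 τ).const_mul _)]
  have h4 : ∀ τ : Equiv.Perm ι, ∫ x, (Equiv.Perm.sign τ : ℝ) *
      (G τ x * fderiv ℝ (u i0) x (Pi.single (τ i0) 1)) =
      - ∫ x, (Equiv.Perm.sign τ : ℝ) * (fderiv ℝ (G τ) x (Pi.single (τ i0) 1) * u i0 x) := by
    intro τ
    rw [integral_const_mul, integral_const_mul,
      integral_mul_fderiv_eq_neg_fderiv_mul_of_integrable (hi2 τ) (hi1 τ) (hi3 τ)]
    · ring
    · intro x _; exact (hGs τ).differentiable (by simp) x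
    · intro x _; exact (hu i0).differentiable (by simp) x
  simp_rw [h4]
  rw [Finset.sum_neg_distrib, ← integral_finsetSum _ (fun τ _ => (hi2 τ).const_mul _)]
  have h5 : ∀ x, ∑ τ : Equiv.Perm ι, (Equiv.Perm.sign τ : ℝ) *
      (fderiv ℝ (G τ) x (Pi.single (τ i0) 1) * u i0 x) = 0 := by
    intro x
    simp_rw [← mul_assoc]
    rw [← Finset.sum_mul, sum_perm_zero hu i0 x, zero_mul]
  simp_rw [h5]
  simp

lemma integrableOn_det {C D : Set (ι → ℝ)} (hC : IsCompact C) (hDC : D ⊆ C)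
    {u : ι → (ι → ℝ) → ℝ} (hu : ∀ i, ContDiff ℝ ∞ (u i)) :
    IntegrableOn (fun x => (jac u x).det) D :=
  ((continuous_jac_det hu).continuousOn.integrableOn_compact hC).mono_set hDC

lemma integral_det_congr {C D K : Set (ι → ℝ)} (hC : IsCompact C) (hDC : D ⊆ C)
    (hD : IsOpen D) (hK : IsCompact K) (hKD : K ⊆ D) {g h : ι → (ι → ℝ) → ℝ}
    (hg : ∀ i, ContDiff ℝ ∞ (g i)) (hh : ∀ i, ContDiff ℝ ∞ (h i))
    (heq : ∀ x ∈ D, x ∉ K → ∀ i, g i x = h i x) :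
    ∫ x in D, (jac g x).det = ∫ x in D, (jac h x).det := by
  have key : ∀ S : Finset ι, ∫ x in D, (jac (fun i => if i ∈ S then g i else h i) x).det =
      ∫ x in D, (jac h x).det := by
    intro S
    induction S using Finset.induction_on with
    | empty => simp
    | insert k S hk ih =>
      rw [← ih]
      set w : ι → (ι → ℝ) → ℝ := fun i => if i ∈ S then g i else h i with hw
      set w' : ι → (ι → ℝ) → ℝ := fun i => if i ∈ insert k S then g i else h i with hw'
      have hws : ∀ i, ContDiff ℝ ∞ (w i) := by
        intro i; simp only [hw]; split_ifs
        · exact hg i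
        · exact hh i
      have hws' : ∀ i, ContDiff ℝ ∞ (w' i) := by
        intro i; simp only [hw']; split_ifs
        · exact hg i
        · exact hh i
      set u : (ι → ℝ) → ℝ := D.indicator (fun x => g k x - h k x) with hu
      have hu0 : ∀ x, x ∉ K → u x = 0 := by
        intro x hx
        by_cases hxD : x ∈ D
        · simp [hu, hxD, heq x hxD hx k]
        · simp [hu, hxD]
      have hu0' : ∀ x, x ∉ K → u =ᶠ[𝓝 x] fun _ => 0 := by
        intro x hx
        filter_upwards [hK.isClosed.isOpen_compl.mem_nhds hx] with y hy using hu0 y hy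
      have huD : ∀ x ∈ D, u =ᶠ[𝓝 x] fun y => g k y - h k y := by
        intro x hx
        filter_upwards [hD.mem_nhds hx] with y hy
        simp [hu, hy]
      have hus : ContDiff ℝ ∞ u := by
        rw [contDiff_iff_contDiffAt]
        intro x
        by_cases hxD : x ∈ D
        · exact (((hg k).sub (hh k)).contDiffAt).congr_of_eventuallyEq (huD x hxD)
        · exact contDiffAt_const.congr_of_eventuallyEq (hu0' x (fun hx => hxD (hKD hx)))
      have huc : HasCompactSupport u := HasCompactSupport.intro hK (fun x hx => hu0 x hx)
      set w2 : ι → (ι → ℝ) → ℝ := Function.update w k u with hw2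
      have hws2 : ∀ i, ContDiff ℝ ∞ (w2 i) := by
        intro i
        by_cases hik : i = k
        · subst hik; simpa [hw2] using hus
        · simpa [hw2, hik] using hws i
      have h0 : ∫ x, (jac w2 x).det = 0 :=
        integral_det_zero hws2 k (by simpa [hw2] using huc)
      have h1 : ∫ x in D, (jac w2 x).det = 0 := by
        rw [setIntegral_eq_integral_of_forall_compl_eq_zero, h0]
        intro x hx
        apply Matrix.det_eq_zero_of_row_eq_zero k
        intro j
        have : w2 k = u := by simp [hw2]
        simp only [jac, this]
        rw [(hu0' x (fun hx' => hx (hKD hx'))).fderiv_eq]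
        simp
      have h2 : ∀ x ∈ D, (jac w' x).det = (jac w x).det + (jac w2 x).det := by
        intro x hx
        have e1 : jac w' x = (jac w x).updateRow k (jac w x k + jac w2 x k) := by
          ext i j
          by_cases hik : i = k
          · subst hik
            have a1 : w2 i = u := by simp [hw2]
            have a2 : w' i = g i := by simp [hw']
            have a3 : w i = h i := by simp [hw, hk]
            simp only [Matrix.updateRow_self, Pi.add_apply, jac, a1, a2, a3]
            rw [(huD x hx).fderiv_eq, fderiv_fun_sub ((hg i).differentiable (by simp) x)
              ((hh i).differentiable (by simp) x)]
            simp
          · rw [Matrix.updateRow_ne hik]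
            have : w' i = w i := by simp [hw, hw', hik]
            simp [jac, this]
        have e2 : jac w2 x = (jac w x).updateRow k (jac w2 x k) := by
          ext i j
          by_cases hik : i = k
          · subst hik; simp
          · rw [Matrix.updateRow_ne hik]
            simp [jac, hw2, hik]
        rw [e1, Matrix.det_updateRow_add, Matrix.updateRow_eq_self, ← e2]
      rw [setIntegral_congr_fun hD.measurableSet h2, integral_add
        (integrableOn_det hC hDC hws) (integrableOn_det hC hDC hws2), h1, add_zero]
  simpa using key Finset.univ

lemma det_jac_comp {X : ℝ → ℝ} (hX : ContDiff ℝ ∞ X) {u : ι → (ι → ℝ) → ℝ}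
    (hu : ∀ i, ContDiff ℝ ∞ (u i)) (x : ι → ℝ) :
    (jac (fun i y => X (u i y)) x).det = (∏ i, deriv X (u i x)) * (jac u x).det := by
  rw [← Matrix.det_mul_column]
  congr 1
  ext i j
  have := (hX.differentiable (by simp) (u i x)).hasDerivAt.comp_hasFDerivAt x
    ((hu i).differentiable (by simp) x).hasFDerivAt
  simp only [jac, Matrix.of_apply]
  rw [show (fun y => X (u i y)) = X ∘ u i from rfl, this.fderiv]
  simp

lemma det_jac_comp_zero {X : ℝ → ℝ} (hX : ContDiff ℝ ∞ X) {r : ℝ}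
    (hXr : ∀ t, r < |t| → deriv X t = 0) {u : ι → (ι → ℝ) → ℝ}
    (hu : ∀ i, ContDiff ℝ ∞ (u i)) (x : ι → ℝ) (hx : ∃ i, r < |u i x|) :
    (jac (fun i y => X (u i y)) x).det = 0 := by
  obtain ⟨i, hi⟩ := hx
  rw [det_jac_comp hX hu, Finset.prod_eq_zero (Finset.mem_univ i) (hXr _ hi), zero_mul]

lemma homotopy_inv {C D K K0 : Set (ι → ℝ)} (hC : IsCompact C) (hDC : D ⊆ C)
    (hD : IsOpen D) (hK : IsCompact K) (hKD : K ⊆ D) (hK0 : IsCompact K0)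
    (hK0K : K0 ⊆ interior K) {X : ℝ → ℝ} (hX : ContDiff ℝ ∞ X) {r : ℝ}
    (hXr : ∀ t, r < |t| → deriv X t = 0) {P : ι → ℝ × (ι → ℝ) → ℝ}
    (hP : ∀ i, ContDiff ℝ ∞ (P i))
    (hne : ∀ t ∈ Icc (0:ℝ) 1, ∀ x ∈ D, x ∉ K0 → ∃ i, r < |P i (t, x)|) :
    ∫ x in D, (jac (fun i y => X (P i (0, y))) x).det =
    ∫ x in D, (jac (fun i y => X (P i (1, y))) x).det := by
  obtain ⟨τ, h0, h1, hτ⟩ := exists_contMDiffMap_zero_one_nhds_of_isClosed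
    (n := (⊤ : ℕ∞)) (modelWithCornersSelf ℝ (ι → ℝ)) hK0.isClosed
    (isOpen_interior (s := K)).isClosed_compl
    (by rw [← subset_compl_iff_disjoint_right, compl_compl]; exact hK0K)
  have hτs : ContDiff ℝ ∞ (τ : (ι → ℝ) → ℝ) := τ.contMDiff.contDiff
  have hPt : ∀ i, ContDiff ℝ ∞ (fun y => P i (τ y, y)) := fun i =>
    (hP i).comp (hτs.prodMk contDiff_id)
  have hPc : ∀ (c : ℝ) i, ContDiff ℝ ∞ (fun y => P i (c, y)) := fun c i =>
    (hP i).comp (contDiff_const.prodMk contDiff_id)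
  rw [← integral_det_congr hC hDC hD hK hKD (g := fun i y => X (P i (τ y, y)))
    (h := fun i y => X (P i (1, y))) (fun i => hX.comp (hPt i)) (fun i => hX.comp (hPc 1 i))]
  · apply setIntegral_congr_fun hD.measurableSet
    intro x hx
    by_cases hxK : x ∈ K0
    · have hev : ∀ᶠ y in 𝓝 x, τ y = 0 := (eventually_nhdsSet_iff_forall.1 h0) x hxK
      dsimp only
      congr 1
      ext i j
      simp only [jac]
      have : (fun y => X (P i (0, y))) =ᶠ[𝓝 x] fun y => X (P i (τ y, y)) := by
        filter_upwards [hev] with y hy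
        rw [hy]
      rw [this.fderiv_eq]
    · dsimp only
      rw [det_jac_comp_zero hX hXr (hPc 0) x (hne 0 (by simp) x hx hxK),
        det_jac_comp_zero hX hXr hPt x (hne (τ x) (hτ x) x hx hxK)]
  · intro x _ hxK i
    have : τ x = 1 := h1.self_of_nhdsSet x (fun hx => hxK (interior_subset hx))
    rw [this]

lemma exists_X {r : ℝ} (hr : 0 < r) : ∃ X : ℝ → ℝ, ContDiff ℝ ∞ X ∧
    (∀ t, r < |t| → deriv X t = 0) ∧ (∀ t, 0 ≤ deriv X t) ∧ 0 < deriv X 0 := by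
  let f : ContDiffBump (0:ℝ) := ⟨r/2, r, by positivity, by linarith⟩
  have hfc : Continuous f := f.continuous
  have hder : ∀ t, HasDerivAt (fun t => ∫ s in (0:ℝ)..t, f s) (f t) t := fun t =>
    intervalIntegral.integral_hasDerivAt_right (hfc.intervalIntegrable _ _)
      (hfc.stronglyMeasurableAtFilter _ _) hfc.continuousAt
  have hd : deriv (fun t => ∫ s in (0:ℝ)..t, f s) = f := funext fun t => (hder t).deriv
  refine ⟨fun t => ∫ s in (0:ℝ)..t, f s, ?_, ?_, ?_, ?_⟩
  · rw [contDiff_infty_iff_deriv, hd]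
    exact ⟨fun t => (hder t).differentiableAt, f.contDiff⟩
  · intro t ht
    rw [hd]
    apply f.zero_of_le_dist
    simpa [f] using ht.le
  · intro t; rw [hd]; exact f.nonneg
  · rw [hd]
    rw [f.one_of_mem_closedBall]
    · simp
    · simp only [f, Metric.mem_closedBall, dist_self]; positivity

lemma exists_lt_abs {r : ℝ} (hr : 0 ≤ r) {v : ι → ℝ} (h : r < ‖v‖) : ∃ i, r < |v i| := by
  by_contra! hc
  exact absurd ((pi_norm_le_iff_of_nonneg hr).2 hc) (not_le.2 h)

theorem exists_zero {C D K K0 : Set (ι → ℝ)} (hC : IsCompact C) (hDC : D ⊆ C)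
    (hD : IsOpen D) (hK : IsCompact K) (hKD : K ⊆ D) (hK0 : IsCompact K0)
    (hK0K : K0 ⊆ interior K) (H : ℝ × (ι → ℝ) → (ι → ℝ))
    (hH : ContinuousOn H (Icc (0:ℝ) 1 ×ˢ C))
    (hne : ∀ t ∈ Icc (0:ℝ) 1, ∀ x ∈ C, H (t, x) = 0 → x ∈ interior K0)
    (Q : (ι → ℝ) → (ι → ℝ)) (hQ : ContDiff ℝ ∞ Q) (hHQ : ∀ x ∈ C, H (1, x) = Q x)
    (s : ℝ) (hs : s ≠ 0) (hdet : ∀ x ∈ C, Q x = 0 → (jac (fun i y => Q y i) x).det = s)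
    (x0 : ι → ℝ) (hx0 : x0 ∈ D) (hQx0 : Q x0 = 0) : ∃ x ∈ C, H (0, x) = 0 := by
  by_contra! hcon
  have hQi : ∀ i, ContDiff ℝ ∞ (fun y => Q y i) := fun i => contDiff_pi.1 hQ i
  have hcdet := continuous_jac_det hQi
  obtain ⟨e1, he1, h1⟩ : ∃ e, 0 < e ∧ ∀ p ∈ Icc (0:ℝ) 1 ×ˢ (C \ interior K0), e ≤ ‖H p‖ := by
    apply (isCompact_Icc.prod (hC.diff isOpen_interior)).exists_forall_le'
    · exact (hH.mono (prod_mono le_rfl sdiff_subset)).norm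
    · rintro ⟨t, x⟩ ⟨ht, hx⟩
      exact norm_pos_iff.2 (fun h => hx.2 (hne t ht x hx.1 h))
  obtain ⟨e2, he2, h2⟩ : ∃ e, 0 < e ∧ ∀ p ∈ ({0} : Set ℝ) ×ˢ C, e ≤ ‖H p‖ := by
    apply (isCompact_singleton.prod hC).exists_forall_le'
    · exact (hH.mono (prod_mono (by simp) le_rfl)).norm
    · rintro ⟨t, x⟩ ⟨ht, hx⟩
      obtain rfl : t = 0 := ht
      exact norm_pos_iff.2 (hcon x hx)
  obtain ⟨e3, he3, h3⟩ : ∃ e, 0 < e ∧ ∀ x ∈ C ∩ {x | s * (jac (fun i y => Q y i) x).det ≤ 0},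
      e ≤ ‖Q x‖ := by
    apply (hC.inter_right (isClosed_le (continuous_const.mul hcdet)
      continuous_const)).exists_forall_le'
    · exact hQ.continuous.norm.continuousOn
    · rintro x ⟨hx, hx2⟩
      refine norm_pos_iff.2 (fun h => ?_)
      replace hx2 : s * (jac (fun i y => Q y i) x).det ≤ 0 := hx2
      rw [hdet x hx h] at hx2
      nlinarith [mul_self_pos.2 hs]
  obtain ⟨r, hr, hr1, hr2, hr3⟩ : ∃ r : ℝ, 0 < r ∧ 4 * r ≤ e1 ∧ 4 * r ≤ e2 ∧ 4 * r ≤ e3 := by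
    refine ⟨min e1 (min e2 e3) / 4, by positivity, ?_, ?_, ?_⟩
    · linarith [min_le_left e1 (min e2 e3)]
    · linarith [min_le_right e1 (min e2 e3), min_le_left e2 e3]
    · linarith [min_le_right e1 (min e2 e3), min_le_right e2 e3]
  obtain ⟨X, hX, hXr, hXn, hX0⟩ := exists_X hr
  have hcl : IsClosed (Icc (0:ℝ) 1 ×ˢ C) := isClosed_Icc.prod hC.isClosed
  obtain ⟨Hc, hHc⟩ := ContinuousMap.exists_restrict_eq hcl
    (⟨_, hH.domRestrict⟩ : C(↥(Icc (0:ℝ) 1 ×ˢ C), ι → ℝ))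
  have hHc' : ∀ p ∈ Icc (0:ℝ) 1 ×ˢ C, Hc p = H p := by
    intro p hp
    exact congrArg (fun f : C(↥(Icc (0:ℝ) 1 ×ˢ C), ι → ℝ) => f ⟨p, hp⟩) hHc
  obtain ⟨P0, hP0, hP0d, -⟩ := Hc.continuous.exists_contDiff_approx (⊤ : ℕ∞)
    (continuous_const (y := r)) (fun _ => hr)
  set P : ℝ × (ι → ℝ) → (ι → ℝ) := fun p => P0 p + p.1 • (Q p.2 - P0 (1, p.2)) with hPdef
  have hPs : ContDiff ℝ ∞ P := by
    refine hP0.add (contDiff_fst.smul ((hQ.comp contDiff_snd).sub (hP0.comp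
      (contDiff_const.prodMk contDiff_snd))))
  have hPi : ∀ i, ContDiff ℝ ∞ (fun p => P p i) := fun i => contDiff_pi.1 hPs i
  have happ : ∀ t ∈ Icc (0:ℝ) 1, ∀ x ∈ C, ‖P (t, x) - H (t, x)‖ ≤ 2 * r := by
    intro t ht x hx
    have a1 : ‖P0 (t, x) - H (t, x)‖ ≤ r := by
      rw [← hHc' (t, x) ⟨ht, hx⟩, ← dist_eq_norm]; exact (hP0d _).le
    have a2 : ‖Q x - P0 (1, x)‖ ≤ r := by
      rw [← hHQ x hx, ← hHc' (1, x) ⟨by simp, hx⟩, ← dist_eq_norm, dist_comm]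
      exact (hP0d _).le
    have : P (t, x) - H (t, x) = (P0 (t, x) - H (t, x)) + t • (Q x - P0 (1, x)) := by
      simp only [hPdef]; abel
    rw [this]
    refine (norm_add_le _ _).trans ?_
    rw [norm_smul, Real.norm_of_nonneg ht.1]
    nlinarith [ht.2, norm_nonneg (Q x - P0 (1, x))]
  have hbig : ∀ t ∈ Icc (0:ℝ) 1, ∀ x ∈ C, 4 * r ≤ ‖H (t, x)‖ → ∃ i, r < |P (t, x) i| := by
    intro t ht x hx hle
    apply exists_lt_abs hr.le
    have := happ t ht x hx
    have h5 := norm_sub_norm_le (H (t, x)) (P (t, x))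
    rw [norm_sub_rev] at h5
    linarith
  have hinv := homotopy_inv hC hDC hD hK hKD hK0 hK0K hX hXr (P := fun i p => P p i) hPi
    (by
      intro t ht x hx hxK
      exact hbig t ht x (hDC hx) (hr1.trans (h1 (t, x)
        ⟨ht, hDC hx, fun h => hxK (interior_subset h)⟩)))
  have hzero : ∫ x in D, (jac (fun i y => X (P (0, y) i)) x).det = 0 := by
    rw [setIntegral_congr_fun hD.measurableSet (g := fun _ => (0:ℝ))]
    · simp
    · intro x hx
      exact det_jac_comp_zero hX hXr (u := fun i y => P (0, y) i) (fun i => (hPi i).comp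
        (contDiff_const.prodMk contDiff_id)) x
        (hbig 0 (by simp) x (hDC hx) (hr2.trans (h2 (0, x) ⟨rfl, hDC hx⟩)))
  have hPQ : ∀ y, P (1, y) = Q y := by intro y; simp [hPdef]
  simp only [hPQ] at hinv
  rw [hzero] at hinv
  set F : (ι → ℝ) → ℝ := fun x => s * (jac (fun i y => X (Q y i)) x).det with hF
  have hFc : Continuous F :=
    continuous_const.mul (continuous_jac_det (fun i => hX.comp (hQi i)))
  have hFeq : ∀ x, F x = (∏ i, deriv X (Q x i)) * (s * (jac (fun i y => Q y i) x).det) := by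
    intro x
    simp only [hF]
    rw [det_jac_comp hX hQi]; ring
  have hF0 : ∫ x in D, F x = 0 := by
    simp only [hF]
    rw [integral_const_mul, ← hinv, mul_zero]
  have hFn : ∀ x ∈ D, 0 ≤ F x := by
    intro x hx
    by_cases hx3 : s * (jac (fun i y => Q y i) x).det ≤ 0
    · have := h3 x ⟨hDC hx, hx3⟩
      obtain ⟨i, hi⟩ := exists_lt_abs hr.le (show r < ‖Q x‖ by linarith)
      rw [hFeq, Finset.prod_eq_zero (Finset.mem_univ i) (hXr _ hi), zero_mul]
    · rw [hFeq]
      exact mul_nonneg (Finset.prod_nonneg fun i _ => hXn _) (not_le.1 hx3).le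
  have hae : F =ᵐ[volume.restrict D] 0 := by
    refine (setIntegral_eq_zero_iff_of_nonneg_ae ?_ ?_).1 hF0
    · exact (ae_restrict_iff' hD.measurableSet).2 (Eventually.of_forall hFn)
    · exact (hFc.continuousOn.integrableOn_compact hC).mono_set hDC
  have hEq : EqOn F (fun _ => 0) D :=
    Measure.eqOn_open_of_ae_eq hae hD hFc.continuousOn continuousOn_const
  have h7 := hEq hx0
  rw [hFeq, hdet x0 (hDC hx0) hQx0] at h7
  have h8 : 0 < ∏ i, deriv X (Q x0 i) := Finset.prod_pos (fun i _ => by rw [hQx0]; exact hX0)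
  have : 0 < (∏ i, deriv X (Q x0 i)) * (s * s) := mul_pos h8 (mul_self_pos.2 hs)
  simp only at h7
  linarith

end jacobian

section rot

variable {m : ℕ}

/-- Partner index for the rotation planes. -/
def partner (hme : Even m) (k : Fin (m + 1)) : Fin (m + 1) :=
  if h : (k : ℕ) = m then k
  else if (k : ℕ) % 2 = 0 then ⟨k + 1, by omega⟩ else ⟨k - 1, by omega⟩

lemma partner_val (hme : Even m) (k : Fin (m + 1)) : (partner hme k : ℕ) =
    if (k : ℕ) = m then (k : ℕ) else if (k : ℕ) % 2 = 0 then (k : ℕ) + 1 else (k : ℕ) - 1 := by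
  unfold partner
  split_ifs <;> rfl

lemma partner_invol (hme : Even m) : Function.Involutive (partner hme) := by
  intro k
  apply Fin.ext
  have h2 : m % 2 = 0 := Nat.even_iff.1 hme
  have := k.isLt
  rw [partner_val, partner_val]
  split_ifs <;> omega

/-- Signs for the rotation planes. -/
def sg (k : Fin (m + 1)) : ℝ := if (k : ℕ) = m then 0 else if (k : ℕ) % 2 = 0 then -1 else 1

lemma sg_partner (hme : Even m) (k : Fin (m + 1)) : sg (partner hme k) = - sg k := by
  have h2 : m % 2 = 0 := Nat.even_iff.1 hme
  have := k.isLt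
  unfold sg
  rw [partner_val]
  split_ifs <;> first | omega | simp

/-- Cosine coefficients. -/
def cf (c : ℝ) (k : Fin (m + 1)) : ℝ := if (k : ℕ) = m then 1 else c

lemma cf_partner (hme : Even m) (c : ℝ) (k : Fin (m + 1)) : cf c (partner hme k) = cf c k := by
  have h2 : m % 2 = 0 := Nat.even_iff.1 hme
  have := k.isLt
  unfold cf
  rw [partner_val]
  split_ifs <;> first | omega | simp

lemma rot_sum (hme : Even m) (c s : ℝ) (hcs : c ^ 2 + s ^ 2 = 1) (v : Fin (m + 1) → ℝ) :
    ∑ k, (cf c k * v k + s * sg k * v (partner hme k)) ^ 2 = ∑ k, v k ^ 2 := by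
  have h1 : ∑ k, cf c k * sg k * v k * v (partner hme k) = 0 := by
    have := Equiv.sum_comp (partner_invol hme).toPerm
      (fun k => cf c k * sg k * v k * v (partner hme k))
    simp only [Function.Involutive.coe_toPerm, sg_partner, cf_partner, partner_invol hme _] at this
    have h : ∑ k, cf c k * -sg k * v (partner hme k) * v k =
        - ∑ k, cf c k * sg k * v k * v (partner hme k) := by
      rw [← Finset.sum_neg_distrib]
      exact Finset.sum_congr rfl (fun k _ => by ring)
    linarith
  have h2 : ∑ k, sg k ^ 2 * v (partner hme k) ^ 2 = ∑ k, sg k ^ 2 * v k ^ 2 := by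
    have := Equiv.sum_comp (partner_invol hme).toPerm
      (fun k => sg k ^ 2 * v (partner hme k) ^ 2)
    simp only [Function.Involutive.coe_toPerm, sg_partner, partner_invol hme _, neg_sq] at this
    exact this.symm
  calc ∑ k, (cf c k * v k + s * sg k * v (partner hme k)) ^ 2
      = ∑ k, cf c k ^ 2 * v k ^ 2 + 2 * s * ∑ k, cf c k * sg k * v k * v (partner hme k)
        + s ^ 2 * ∑ k, sg k ^ 2 * v (partner hme k) ^ 2 := by
        rw [Finset.mul_sum, Finset.mul_sum, ← Finset.sum_add_distrib, ← Finset.sum_add_distrib]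
        exact Finset.sum_congr rfl (fun k _ => by ring)
    _ = ∑ k, v k ^ 2 := by
        rw [h1, h2, mul_zero, add_zero, Finset.mul_sum, ← Finset.sum_add_distrib]
        apply Finset.sum_congr rfl
        intro k _
        have : cf c k ^ 2 + s ^ 2 * sg k ^ 2 = 1 := by
          unfold cf sg
          split_ifs <;> simp [hcs]
        linear_combination v k ^ 2 * this

/-- A path of rotations. -/
def Rot (hme : Even m) (t : ℝ) (v : EuclideanSpace ℝ (Fin (m + 1))) :
    EuclideanSpace ℝ (Fin (m + 1)) :=
  WithLp.toLp 2 (fun k => cf (Real.cos (Real.pi * t)) k * v k +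
    Real.sin (Real.pi * t) * sg k * v (partner hme k))

lemma norm_Rot (hme : Even m) (t : ℝ) (v : EuclideanSpace ℝ (Fin (m + 1))) :
    ‖Rot hme t v‖ = ‖v‖ := by
  have : ‖Rot hme t v‖ ^ 2 = ‖v‖ ^ 2 := by
    rw [EuclideanSpace.real_norm_sq_eq, EuclideanSpace.real_norm_sq_eq]
    exact rot_sum hme _ _ (by rw [add_comm]; exact Real.sin_sq_add_cos_sq _) v
  exact (sq_eq_sq₀ (norm_nonneg _) (norm_nonneg _)).1 this

lemma Rot_zero (hme : Even m) (v : EuclideanSpace ℝ (Fin (m + 1))) : Rot hme 0 v = v := by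
  ext k
  simp [Rot, cf]

lemma Rot_one (hme : Even m) (v : EuclideanSpace ℝ (Fin (m + 1))) (k) :
    Rot hme 1 v k = cf (-1) k * v k := by
  simp [Rot]

lemma continuous_Rot (hme : Even m) :
    Continuous (fun p : ℝ × EuclideanSpace ℝ (Fin (m + 1)) => Rot hme p.1 p.2) := by
  unfold Rot
  refine (PiLp.continuous_toLp 2 _).comp (continuous_pi fun k => ?_)
  refine Continuous.add (Continuous.mul ?_ (by fun_prop)) (by fun_prop)
  unfold cf
  split_ifs <;> fun_prop

end rot

section core

variable {m l : ℕ}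

/-- The coordinate vectors. -/
def vec (z : Fin l × Fin 2 × Fin (m + 1) → ℝ) (i : Fin l) (e : Fin 2) :
    EuclideanSpace ℝ (Fin (m + 1)) := WithLp.toLp 2 (fun k => z (i, e, k))

lemma continuous_vec (i : Fin l) (e : Fin 2) :
    Continuous (fun z : Fin l × Fin 2 × Fin (m + 1) → ℝ => vec z i e) := by
  unfold vec
  fun_prop

instance : Nonempty (Sph m) := ⟨⟨EuclideanSpace.single 0 1, by simp⟩⟩

/-- Normalization. -/
def nrm (v : EuclideanSpace ℝ (Fin (m + 1))) : Sph m :=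
  if h : v ≠ 0 then ⟨‖v‖⁻¹ • v, by simp [norm_smul, h]⟩ else Classical.arbitrary _

lemma nrm_coe {v : EuclideanSpace ℝ (Fin (m + 1))} (h : v ≠ 0) :
    (nrm v : EuclideanSpace ℝ (Fin (m + 1))) = ‖v‖⁻¹ • v := by
  simp [nrm, h]

lemma nrm_self (x : Sph m) : nrm (x : EuclideanSpace ℝ (Fin (m + 1))) = x := by
  apply Subtype.ext
  rw [nrm_coe (ne_zero_of_mem_unit_sphere x)]
  simp

lemma continuousOn_nrm :
    ContinuousOn (nrm : EuclideanSpace ℝ (Fin (m + 1)) → Sph m) {v | v ≠ 0} := by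
  rw [continuousOn_iff_continuous_domRestrict]
  refine Continuous.subtype_mk (f := fun v : {v : EuclideanSpace ℝ (Fin (m + 1)) | v ≠ 0} =>
    ‖v.1‖⁻¹ • v.1) ?_ ?_ |>.congr ?_
  · exact (continuous_norm.comp continuous_subtype_val).inv₀ (fun v => norm_ne_zero_iff.2 v.2)
      |>.smul continuous_subtype_val
  · intro v
    have := v.2
    simp only [mem_ofPred_eq] at this
    simp [norm_smul, this]
  · intro v
    apply Subtype.ext
    exact (nrm_coe v.2).symm

/-- The configuration on the product of spheres given by normalizing. -/
def ypt (z : Fin l × Fin 2 × Fin (m + 1) → ℝ) : Fin l × Fin 2 → Sph m :=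
  fun k => if k.2 = 0 then nrm (vec z k.1 0) else - nrm (vec z k.1 1)

/-- Closed shell -/
def shell (p q : ℝ) : Set (Fin l × Fin 2 × Fin (m + 1) → ℝ) :=
  {z | ∀ i e, p ≤ ‖vec z i e‖ ∧ ‖vec z i e‖ ≤ q}

/-- Open shell -/
def oshell (p q : ℝ) : Set (Fin l × Fin 2 × Fin (m + 1) → ℝ) :=
  {z | ∀ i e, p < ‖vec z i e‖ ∧ ‖vec z i e‖ < q}

lemma isOpen_oshell (p q : ℝ) : IsOpen (oshell p q : Set (Fin l × Fin 2 × Fin (m + 1) → ℝ)) := by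
  have : (oshell p q : Set (Fin l × Fin 2 × Fin (m + 1) → ℝ)) =
      ⋂ i, ⋂ e, {z | p < ‖vec z i e‖} ∩ {z | ‖vec z i e‖ < q} := by
    ext z; simp [oshell]
  rw [this]
  refine isOpen_iInter_of_finite fun i => isOpen_iInter_of_finite fun e => ?_
  exact (isOpen_lt continuous_const (continuous_vec i e).norm).inter
    (isOpen_lt (continuous_vec i e).norm continuous_const)

lemma isCompact_shell {p q : ℝ} (hq : 0 ≤ q) :
    IsCompact (shell p q : Set (Fin l × Fin 2 × Fin (m + 1) → ℝ)) := by
  have : (shell p q : Set (Fin l × Fin 2 × Fin (m + 1) → ℝ)) =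
      ⋂ i, ⋂ e, {z | p ≤ ‖vec z i e‖} ∩ {z | ‖vec z i e‖ ≤ q} := by
    ext z; simp [shell]
  apply Metric.isCompact_of_isClosed_isBounded
  · rw [this]
    refine isClosed_iInter fun i => isClosed_iInter fun e => ?_
    exact (isClosed_le continuous_const (continuous_vec i e).norm).inter
      (isClosed_le (continuous_vec i e).norm continuous_const)
  · refine (Metric.isBounded_closedBall (x := 0) (r := q)).subset ?_
    intro z hz
    rw [mem_closedBall_zero_iff, pi_norm_le_iff_of_nonneg hq]
    rintro ⟨i, e, k⟩
    exact (PiLp.norm_apply_le (vec z i e) k).trans (hz i e).2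

lemma oshell_subset (p q : ℝ) :
    (oshell p q : Set (Fin l × Fin 2 × Fin (m + 1) → ℝ)) ⊆ shell p q :=
  fun _ hz i e => ⟨(hz i e).1.le, (hz i e).2.le⟩

lemma shell_subset {p q p' q' : ℝ} (hp : p' < p) (hq : q < q') :
    (shell p q : Set (Fin l × Fin 2 × Fin (m + 1) → ℝ)) ⊆ oshell p' q' :=
  fun _ hz i e => ⟨hp.trans_le (hz i e).1, (hz i e).2.trans_lt hq⟩

/-- The final polynomial map. -/
def Qmap (z : Fin l × Fin 2 × Fin (m + 1) → ℝ) : Fin l × Fin 2 × Fin (m + 1) → ℝ :=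
  fun j => if j.2.1 = 0 then z (j.1, 0, j.2.2) - z (j.1, 1, j.2.2)
    else cf (-1) j.2.2 * z (j.1, 0, j.2.2) - (∑ k, z (j.1, 0, k) * z (j.1, 0, k)) * z (j.1, 1, j.2.2)

lemma contDiff_Qmap : ContDiff ℝ ∞ (Qmap : (Fin l × Fin 2 × Fin (m + 1) → ℝ) → _) := by
  unfold Qmap
  rw [contDiff_pi]
  intro j
  split_ifs <;> fun_prop

lemma Qmap_zero {z : Fin l × Fin 2 × Fin (m + 1) → ℝ} (hz : z ∈ shell (1/2) 2)
    (h0 : Qmap z = 0) (i : Fin l) : (∀ e, ∀ k : Fin (m + 1), (k : ℕ) ≠ m → z (i, e, k) = 0) ∧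
      (∀ e, z (i, e, Fin.last m) = z (i, 0, Fin.last m)) ∧
      z (i, 0, Fin.last m) * z (i, 0, Fin.last m) = 1 := by
  have h1 : ∀ k, z (i, 1, k) = z (i, 0, k) := by
    intro k
    have := congrFun h0 (i, 0, k)
    simp [Qmap] at this
    linarith
  have h2 : ∀ k, cf (-1) k * z (i, 0, k) = (∑ k, z (i, 0, k) * z (i, 0, k)) * z (i, 0, k) := by
    intro k
    have := congrFun h0 (i, 1, k)
    simp [Qmap, h1] at this
    linarith
  have hS0 : 0 ≤ ∑ k, z (i, 0, k) * z (i, 0, k) :=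
    Finset.sum_nonneg fun k _ => mul_self_nonneg _
  have h3 : ∀ k : Fin (m + 1), (k : ℕ) ≠ m → z (i, 0, k) = 0 := by
    intro k hk
    have h := h2 k
    simp only [cf, hk, if_false] at h
    have : (∑ k, z (i, 0, k) * z (i, 0, k) + 1) * z (i, 0, k) = 0 := by linarith
    rcases mul_eq_zero.1 this with h | h
    · linarith
    · exact h
  have h4 : ∑ k, z (i, 0, k) * z (i, 0, k) = z (i, 0, Fin.last m) * z (i, 0, Fin.last m) := by
    rw [Finset.sum_eq_single (Fin.last m)]
    · intro k _ hk
      rw [h3 k (fun h => hk (Fin.ext h))]; simp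
    · simp
  have h5 : z (i, 0, Fin.last m) ≠ 0 := by
    intro h
    have hv : vec z i 0 = 0 := by
      ext k
      by_cases hk : (k : ℕ) = m
      · have : k = Fin.last m := Fin.ext hk
        simp [vec, this, h]
      · simp [vec, h3 k hk]
    have := (hz i 0).1
    rw [hv, norm_zero] at this
    norm_num at this
  refine ⟨?_, ?_, ?_⟩
  · intro e k hk
    fin_cases e
    · exact h3 k hk
    · simpa [h1] using h3 k hk
  · intro e
    fin_cases e
    · rfl
    · exact h1 _
  · have h := h2 (Fin.last m)
    rw [h4] at h
    simp only [cf, Fin.val_last, if_true] at h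
    have h' : (z (i, 0, Fin.last m) * z (i, 0, Fin.last m)) * z (i, 0, Fin.last m) =
      1 * z (i, 0, Fin.last m) := h.symm
    exact mul_right_cancel₀ h5 h'

/-- The Jacobian at the zeros. -/
def J0 (l m : ℕ) : Matrix (Fin l × Fin 2 × Fin (m + 1)) (Fin l × Fin 2 × Fin (m + 1)) ℝ :=
  Matrix.kroneckerMap (· * ·) (1 : Matrix (Fin l) (Fin l) ℝ)
    (Matrix.kroneckerMap (· * ·) !![(1:ℝ), -1; -1, -1] (1 : Matrix (Fin (m + 1)) (Fin (m + 1)) ℝ))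

lemma det_J0 : (J0 l m).det ≠ 0 := by
  unfold J0
  rw [Matrix.det_kronecker, Matrix.det_kronecker, Matrix.det_fin_two]
  simp
  norm_num

lemma jac_Qmap {z : Fin l × Fin 2 × Fin (m + 1) → ℝ} (hz : z ∈ shell (1/2) 2)
    (h0 : Qmap z = 0) : jac (fun j y => Qmap y j) z = J0 l m := by
  ext ⟨i, e, k⟩ ⟨i', e', k'⟩
  have hp : ∀ j, HasFDerivAt (fun y : Fin l × Fin 2 × Fin (m + 1) → ℝ => y j)
    (ContinuousLinearMap.proj j : (Fin l × Fin 2 × Fin (m + 1) → ℝ) →L[ℝ] ℝ) z :=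
    fun j => hasFDerivAt_apply j z
  obtain ⟨q1, q2, q3⟩ := Qmap_zero hz h0 i
  have hlast : ∀ k : Fin (m + 1), k = Fin.last m ∨ (k : ℕ) ≠ m := by
    intro k
    by_cases h : (k : ℕ) = m
    · exact Or.inl (Fin.ext h)
    · exact Or.inr h
  have hS : ∑ k, z (i, 0, k) * z (i, 0, k) = 1 := by
    rw [Finset.sum_eq_single (Fin.last m)]
    · exact q3
    · intro k _ hk
      rw [q1 0 k (fun h => hk (Fin.ext h))]; simp
    · simp
  fin_cases e
  · have : (fun y : Fin l × Fin 2 × Fin (m + 1) → ℝ => Qmap y (i, 0, k)) =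
      fun y => y (i, 0, k) - y (i, 1, k) := by ext y; simp [Qmap]
    simp only [jac, Fin.zero_eta, this, ((hp (i, 0, k)).fun_sub (hp (i, 1, k))).fderiv]
    fin_cases e' <;>
    simp [J0, Pi.single_apply, Matrix.one_apply, Prod.ext_iff, ite_and] <;>
    split_ifs <;> simp
  · have : (fun y : Fin l × Fin 2 × Fin (m + 1) → ℝ => Qmap y (i, 1, k)) =
      fun y => cf (-1) k * y (i, 0, k) - (∑ k, y (i, 0, k) * y (i, 0, k)) * y (i, 1, k) := by
      ext y; simp [Qmap]
    have hd := ((hp (i, 0, k)).const_mul (cf (-1) k)).fun_sub ((HasFDerivAt.fun_sum (u := Finset.univ)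
      (fun k _ => (hp (i, 0, k)).fun_mul (hp (i, 0, k)))).fun_mul (hp (i, 1, k)))
    simp only [jac, Fin.mk_one, this, hd.fderiv]
    by_cases hi : i = i'
    · subst hi
      fin_cases e'
      · rcases hlast k with hk | hk
        · subst hk
          rcases hlast k' with hk' | hk'
          · subst hk'
            simp [J0, Pi.single_apply, Matrix.one_apply, Prod.ext_iff, ite_and, cf, q2 1, Finset.sum_add_distrib]
            linarith
          · have : Fin.last m ≠ k' := fun h => hk' (by rw [← h]; rfl)
            simp [J0, Pi.single_apply, Matrix.one_apply, Prod.ext_iff, ite_and, q1 0 k' hk', this, Finset.sum_add_distrib]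
        · simp [J0, Pi.single_apply, Matrix.one_apply, Prod.ext_iff, ite_and, cf, hk, q1 1 k hk]
          split_ifs <;> simp
      · simp [J0, Pi.single_apply, Matrix.one_apply, Prod.ext_iff, ite_and, hS]
        split_ifs <;> simp
    · have hi' : ∀ a b, (i, a, b) ≠ (i', e', k') := fun a b h => hi (congrArg Prod.fst h)
      simp [J0, Pi.single_apply, Matrix.one_apply, hi, hi']

end core

section core2

variable {m l : ℕ}

lemma vec_ne_zero {z : Fin l × Fin 2 × Fin (m + 1) → ℝ} (hz : z ∈ shell (1/2) 2) (i : Fin l)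
    (e : Fin 2) : vec z i e ≠ 0 := by
  intro h
  have := (hz i e).1
  rw [h, norm_zero] at this
  norm_num at this

lemma continuousOn_ypt :
    ContinuousOn (ypt : (Fin l × Fin 2 × Fin (m + 1) → ℝ) → (Fin l × Fin 2 → Sph m))
      (shell (1/2) 2) := by
  have h : ∀ i e, ContinuousOn (fun z : Fin l × Fin 2 × Fin (m + 1) → ℝ => nrm (vec z i e))
      (shell (1/2) 2) := fun i e =>
    continuousOn_nrm.comp (continuous_vec i e).continuousOn (fun z hz => vec_ne_zero hz i e)
  rw [continuousOn_pi]
  intro k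
  unfold ypt
  by_cases hk : k.2 = 0
  · simp only [hk, if_true]
    exact h _ _
  · simp only [hk, if_false]
    exact (h _ _).neg

/-- The homotopy of vector-valued maps. -/
def Hmap (hme : Even m) (f : Fin l × Fin 2 → (I × (Fin l × Fin 2 → Sph m)) → Sph m)
    (p : ℝ × (Fin l × Fin 2 × Fin (m + 1) → ℝ)) : Fin l × Fin 2 × Fin (m + 1) → ℝ :=
  fun j => if j.2.1 = 0 then
      ((1 - p.1) + p.1 * ‖vec p.2 j.1 0‖) *
        (f (j.1, 0) (projIcc 0 1 zero_le_one p.1, ypt p.2) : EuclideanSpace ℝ (Fin (m + 1))) j.2.2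
      - p.2 (j.1, 1, j.2.2)
    else
      ((1 - p.1) + p.1 * ‖vec p.2 j.1 0‖) *
        Rot hme p.1 (f (j.1, 1) (projIcc 0 1 zero_le_one p.1, ypt p.2)) j.2.2
      - ((1 - p.1) * ‖vec p.2 j.1 0‖ + p.1 * ‖vec p.2 j.1 0‖ ^ 2) * p.2 (j.1, 1, j.2.2)

lemma continuousOn_Rot {A : Type*} [TopologicalSpace A] (hme : Even m) {S : Set (ℝ × A)}
    {g : ℝ × A → EuclideanSpace ℝ (Fin (m + 1))} (hg : ContinuousOn g S) :
    ContinuousOn (fun p => Rot hme p.1 (g p)) S := by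
  intro x hx
  have h1 := (continuous_Rot hme).continuousAt (x := (x.1, g x))
  have h2 : Tendsto (fun p => (p.1, g p)) (𝓝[S] x) (𝓝 (x.1, g x)) :=
    (continuousOn_fst x hx).prodMk_nhds (hg x hx)
  have h3 := h1.tendsto.comp h2
  exact h3

lemma continuousOn_Hmap (hme : Even m)
    (f : Fin l × Fin 2 → (I × (Fin l × Fin 2 → Sph m)) → Sph m) (hf : ∀ k, Continuous (f k)) :
    ContinuousOn (Hmap hme f) (Icc 0 1 ×ˢ shell (1/2) 2) := by
  have h1 : ∀ k, ContinuousOn (fun p : ℝ × (Fin l × Fin 2 × Fin (m + 1) → ℝ) =>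
      (f k (projIcc 0 1 zero_le_one p.1, ypt p.2) : EuclideanSpace ℝ (Fin (m + 1))))
      (Icc 0 1 ×ˢ shell (1/2) 2) := by
    intro k
    refine (continuous_subtype_val.comp (hf k)).comp_continuousOn ?_
    refine ((continuous_projIcc.comp continuous_fst).continuousOn).prodMk ?_
    exact continuousOn_ypt.comp continuousOn_snd (fun p hp => hp.2)
  have h2 := fun k => continuousOn_Rot hme (h1 k)
  have h3 : ∀ i, ContinuousOn (fun p : ℝ × (Fin l × Fin 2 × Fin (m + 1) → ℝ) => ‖vec p.2 i 0‖)
      (Icc 0 1 ×ˢ shell (1/2) 2) :=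
    fun i => ((continuous_vec i 0).comp continuous_snd).norm.continuousOn
  have h4 : ∀ j, ContinuousOn (fun p : ℝ × (Fin l × Fin 2 × Fin (m + 1) → ℝ) => p.2 j)
      (Icc 0 1 ×ˢ shell (1/2) 2) := by
    intro j; fun_prop
  have h5 : ContinuousOn (fun p : ℝ × (Fin l × Fin 2 × Fin (m + 1) → ℝ) => p.1)
      (Icc 0 1 ×ˢ shell (1/2) 2) := continuousOn_fst
  generalize (Icc 0 1 ×ˢ shell (1/2) 2 : Set (ℝ × (Fin l × Fin 2 × Fin (m + 1) → ℝ))) = S at *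
  have hc : ∀ (g : ℝ × (Fin l × Fin 2 × Fin (m + 1) → ℝ) → EuclideanSpace ℝ (Fin (m + 1)))
      (k : Fin (m + 1)), ContinuousOn g S → ContinuousOn (fun p => g p k) S := by
    intro g k hg
    fun_prop
  have h1' := fun i k => hc _ k (h1 i)
  have h2' := fun i k => hc _ k (h2 i)
  rw [continuousOn_pi]
  rintro ⟨i, e, k⟩
  unfold Hmap
  by_cases he : e = 0
  · simp only [he, if_true]
    exact ((((continuousOn_const (c := (1:ℝ))).sub h5).add (h5.mul (h3 i))).mul (h1' (i, 0) k)).sub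
      (h4 _)
  · simp only [he, if_false]
    exact ((((continuousOn_const (c := (1:ℝ))).sub h5).add (h5.mul (h3 i))).mul (h2' (i, 1) k)).sub
      (((((continuousOn_const (c := (1:ℝ))).sub h5).mul (h3 i)).add (h5.mul ((h3 i).pow 2))).mul
        (h4 _))

lemma Hmap_zero (hme : Even m)
    (f : Fin l × Fin 2 → (I × (Fin l × Fin 2 → Sph m)) → Sph m)
    {t : ℝ} (ht : t ∈ Icc (0:ℝ) 1) {z : Fin l × Fin 2 × Fin (m + 1) → ℝ} (hz : z ∈ shell (1/2) 2)
    (h0 : Hmap hme f (t, z) = 0) (i : Fin l) (e : Fin 2) : ‖vec z i e‖ = 1 := by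
  have hfn : ∀ k p, ‖(f k p : EuclideanSpace ℝ (Fin (m + 1)))‖ = 1 := fun k p => by simp
  have hA : ((1 - t) + t * ‖vec z i 0‖) •
      (f (i, 0) (projIcc 0 1 zero_le_one t, ypt z) : EuclideanSpace ℝ (Fin (m + 1))) = vec z i 1 := by
    ext k
    have := congrFun h0 (i, 0, k)
    simp [Hmap] at this
    simp [vec] at this ⊢
    linarith
  have hB : ((1 - t) + t * ‖vec z i 0‖) •
      Rot hme t (f (i, 1) (projIcc 0 1 zero_le_one t, ypt z) : EuclideanSpace ℝ (Fin (m + 1))) =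
      ((1 - t) * ‖vec z i 0‖ + t * ‖vec z i 0‖ ^ 2) • vec z i 1 := by
    ext k
    have := congrFun h0 (i, 1, k)
    simp [Hmap] at this
    simp [vec] at this ⊢
    linarith
  have hA' := congrArg norm hA
  have hB' := congrArg norm hB
  have ha := (hz i 0).1
  have hb := (hz i 1).1
  rw [norm_smul, hfn, mul_one, Real.norm_eq_abs] at hA'
  rw [norm_smul, norm_smul, norm_Rot, hfn, mul_one, Real.norm_eq_abs, Real.norm_eq_abs] at hB'
  set a := ‖vec z i 0‖
  set b := ‖vec z i 1‖
  obtain ⟨ht0, ht1⟩ := ht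
  have hl0 : 0 ≤ (1 - t) + t * a := by nlinarith
  have hl1 : 0 ≤ (1 - t) * a + t * a ^ 2 := by nlinarith [mul_nonneg ht0 (sq_nonneg a)]
  rw [abs_of_nonneg hl0] at hA' hB'
  rw [abs_of_nonneg hl1, hA'] at hB'
  have h1 : (1 - t) * a + t * a ^ 2 = 1 := by
    have : b * ((1 - t) * a + t * a ^ 2) = b * 1 := by linarith
    exact mul_left_cancel₀ (by linarith) this
  have h2 : (a - 1) * (1 + t * a) = 0 := by nlinarith
  have h3 : a = 1 := by
    rcases mul_eq_zero.1 h2 with h | h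
    · linarith
    · nlinarith
  fin_cases e
  · exact h3
  · show b = 1
    rw [← hA', h3]; ring

theorem core (hme : Even m) (f : Fin l × Fin 2 → (I × (Fin l × Fin 2 → Sph m)) → Sph m)
    (hf : ∀ k, Continuous (f k)) (hf1 : ∀ k y, f k (1, y) = y (k.1, 0)) :
    ∃ y : Fin l × Fin 2 → Sph m, ∀ k, f k (0, y) = - y (k.1, 1) := by
  have h_int : ∀ p q : ℝ, (oshell p q : Set (Fin l × Fin 2 × Fin (m + 1) → ℝ)) ⊆
      interior (shell p q) := fun p q =>
    interior_maximal (oshell_subset p q) (isOpen_oshell p q)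
  obtain ⟨z, hz, hz0⟩ := exists_zero (C := shell (1/2) 2) (D := oshell (1/2) 2)
    (K := shell (2/3) (3/2)) (K0 := shell (3/4) (4/3)) (isCompact_shell (by norm_num))
    (oshell_subset _ _) (isOpen_oshell _ _) (isCompact_shell (by norm_num))
    (shell_subset (by norm_num) (by norm_num)) (isCompact_shell (by norm_num))
    ((shell_subset (by norm_num) (by norm_num)).trans (h_int _ _)) (Hmap hme f)
    (continuousOn_Hmap hme f hf)
    (by
      intro t ht z hz h0
      apply h_int
      intro i e
      rw [Hmap_zero hme f ht hz h0]
      norm_num)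
    Qmap contDiff_Qmap
    (by
      intro z hz
      ext ⟨i, e, k⟩
      have ha : ‖vec z i 0‖ ≠ 0 := norm_ne_zero_iff.2 (vec_ne_zero hz i 0)
      have hy : ypt z (i, 0) = nrm (vec z i 0) := by simp [ypt]
      have hp : projIcc (0:ℝ) 1 zero_le_one 1 = 1 := projIcc_right _
      have hcoe : ∀ k, ‖vec z i 0‖ * (nrm (vec z i 0) : EuclideanSpace ℝ (Fin (m + 1))) k
          = z (i, 0, k) := by
        intro k
        rw [nrm_coe (vec_ne_zero hz i 0), PiLp.smul_apply, smul_eq_mul, ← mul_assoc,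
          mul_inv_cancel₀ ha, one_mul]
        rfl
      have hsq : ‖vec z i 0‖ ^ 2 = ∑ k, z (i, 0, k) * z (i, 0, k) := by
        rw [EuclideanSpace.real_norm_sq_eq]
        exact Finset.sum_congr rfl fun k _ => by simp [vec]; ring
      fin_cases e
      · simp [Hmap, Qmap, hp, hf1, hy, hcoe]
      · simp only [Hmap, Qmap, hp, hf1, hy, Rot_one, hsq]
        simp
        rw [← hcoe k]
        ring)
    (J0 l m).det det_J0 (by intro x hx h; rw [jac_Qmap hx h])
    (fun j => if j.2.2 = Fin.last m then 1 else 0)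
    (by
      intro i e
      have : vec (fun j : Fin l × Fin 2 × Fin (m + 1) => if j.2.2 = Fin.last m then (1:ℝ) else 0) i e
        = EuclideanSpace.single (Fin.last m) 1 := by
        ext k
        simp [vec, Pi.single_apply]
      rw [this]
      simp
      norm_num)
    (by
      ext ⟨i, e, k⟩
      simp only [Qmap]
      by_cases hk : k = Fin.last m
      · simp [hk, cf]
      · simp [hk])
  refine ⟨ypt z, ?_⟩
  have hn := Hmap_zero hme f (by simp) hz hz0
  have hp : projIcc (0:ℝ) 1 zero_le_one 0 = 0 := projIcc_left _
  rintro ⟨i, e⟩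
  have hy : ypt z (i, 1) = - nrm (vec z i 1) := by simp [ypt]
  simp only [hy, neg_neg]
  apply Subtype.ext
  rw [nrm_coe (vec_ne_zero hz i 1), hn]
  ext k
  have := congrFun hz0 (i, e, k)
  fin_cases e
  · simp [Hmap, hp] at this
    simp [vec]
    linarith
  · simp [Hmap, hp, Rot_zero, hn] at this
    simp [vec]
    linarith

end core2

section lower

variable {m l : ℕ}

/-- Extension of a partial homotopy by a cutoff. -/
def ext {Y Z : Type*} (U : Set Y) (h : U × I → Z) (c : Y → Z) (r : Y → ℝ) (p : I × Y) : Z :=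
  open Classical in
  if hy : p.2 ∈ U then h (⟨p.2, hy⟩, projIcc 0 1 zero_le_one ((1 - (p.1 : ℝ)) * r p.2)) else c p.2

lemma continuous_ext {Y Z : Type*} [TopologicalSpace Y] [TopologicalSpace Z] {U : Set Y}
    (hU : IsOpen U) (h : U × I → Z) (hh : Continuous h) (c : Y → Z) (hc : Continuous c)
    (r : Y → ℝ) (hr : Continuous r) (hs : tsupport r ⊆ U) (h0 : ∀ y, h (y, 0) = c y) :
    Continuous (ext U h c r) := by
  rw [continuous_iff_continuousAt]
  rintro ⟨t, y⟩
  by_cases hy : y ∈ U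
  · have hV : IsOpen {p : I × Y | p.2 ∈ U} := hU.preimage continuous_snd
    have : ContinuousOn (ext U h c r) {p : I × Y | p.2 ∈ U} := by
      rw [continuousOn_iff_continuous_domRestrict]
      have hg : Continuous (fun p : {p : I × Y | p.2 ∈ U} =>
        h (⟨p.1.2, p.2⟩, projIcc 0 1 zero_le_one ((1 - (p.1.1 : ℝ)) * r p.1.2))) := by
        refine hh.comp (Continuous.prodMk ?_ ?_)
        · exact Continuous.subtype_mk (by fun_prop) _
        · refine continuous_projIcc.comp ?_
          fun_prop
      refine hg.congr ?_
      rintro ⟨p, hp⟩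
      have hp' : p.2 ∈ U := hp
      simp [ext, hp']
    exact this.continuousAt (hV.mem_nhds hy)
  · have hy' : y ∉ tsupport r := fun h => hy (hs h)
    have hV : IsOpen {p : I × Y | p.2 ∉ tsupport r} :=
      (isClosed_tsupport r).isOpen_compl.preimage continuous_snd
    have : (fun p : I × Y => c p.2) =ᶠ[𝓝 (t, y)] ext U h c r := by
      filter_upwards [hV.mem_nhds hy'] with p hp
      have hp0 : r p.2 = 0 := image_eq_zero_of_notMem_tsupport hp
      unfold ext
      split_ifs with hpu
      · rw [hp0, mul_zero, projIcc_left]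
        exact (h0 ⟨p.2, hpu⟩).symm
      · rfl
    exact ((hc.comp continuous_snd).continuousAt).congr this

theorem lower (hme : Even m) (hl : 1 ≤ l)
    (U : Fin l × Fin 2 → Set (Fin l × Fin 2 → Sph m)) (hU : ∀ k, IsOpen (U k))
    (hcov : ∀ y, ∃ k, y ∈ U k) (h : ∀ k, U k × I → Sph m) (hh : ∀ k, Continuous (h k))
    (h0 : ∀ k y, h k (y, 0) = y.1 (k.1, 0)) (h1 : ∀ k y, h k (y, 1) = y.1 (k.1, 1)) : False := by
  obtain ⟨ρ, hρ⟩ := PartitionOfUnity.exists_isSubordinate (s := univ) isClosed_univ U hU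
    (fun y _ => mem_iUnion.2 (hcov y))
  have hlR : (1:ℝ) ≤ l := by exact_mod_cast hl
  let r : Fin l × Fin 2 → (Fin l × Fin 2 → Sph m) → ℝ := fun k y => min 1 (2 * l * ρ k y)
  have hr : ∀ k, Continuous (r k) := fun k =>
    continuous_const.min (continuous_const.mul (ρ k).continuous)
  have hrs : ∀ k, tsupport (r k) ⊆ U k := by
    intro k
    refine (closure_mono ?_).trans (hρ k)
    intro y hy hy0
    apply hy
    simp [r, hy0]
  obtain ⟨y, hy⟩ := core hme (fun k => ext (U k) (h k) (fun y => y (k.1, 0)) (r k))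
    (fun k => continuous_ext (hU k) _ (hh k) _ (continuous_apply _) _ (hr k) (hrs k) (h0 k))
    (by
      intro k y
      unfold ext
      split_ifs with hy
      · simp only [Icc.coe_one, sub_self, zero_mul, projIcc_left]
        exact h0 k ⟨y, hy⟩
      · rfl)
  have hex : ∃ k, 1 ≤ 2 * l * ρ k y := by
    by_contra hcon
    push Not at hcon
    have hs := ρ.sum_eq_one (mem_univ y)
    rw [finsum_eq_sum_of_fintype] at hs
    have : ∑ k, 2 * (l:ℝ) * ρ k y < ∑ k : Fin l × Fin 2, (1:ℝ) :=
      Finset.sum_lt_sum_of_nonempty ⟨(⟨0, hl⟩, 0), by simp⟩ (fun k _ => hcon k)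
    rw [← Finset.mul_sum, hs] at this
    simp at this
    linarith
  obtain ⟨k, hk⟩ := hex
  have hrk : r k y = 1 := min_eq_left hk
  have hyU : y ∈ U k := hrs k (subset_tsupport _ (by simp [hrk]))
  have := hy k
  simp only [ext, hyU, dif_pos, Icc.coe_zero, sub_zero, one_mul, hrk, projIcc_right] at this
  have h1' := (h1 k ⟨y, hyU⟩).symm.trans this
  exact ne_neg_of_mem_unit_sphere ℝ (y (k.1, 1)) h1'

/-- Lower bound with numbered sets -/
theorem lower' (hme : Even m) (hl : 1 ≤ l) (n : ℕ) (hn : n ≤ 2 * l)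
    (U : Fin n → Set (Fin l × Fin 2 → Sph m)) (hU : ∀ k, IsOpen (U k))
    (hcov : ∀ y, ∃ k, y ∈ U k) (h : ∀ k, Fin l → U k × I → Sph m) (hh : ∀ k i, Continuous (h k i))
    (h0 : ∀ k i y, h k i (y, 0) = y.1 (i, 0)) (h1 : ∀ k i y, h k i (y, 1) = y.1 (i, 1)) :
    False := by
  let idx : Fin l × Fin 2 → ℕ := fun k => 2 * k.1 + k.2
  let V : Fin l × Fin 2 → Set (Fin l × Fin 2 → Sph m) := fun k =>
    {y | ∃ hk : idx k < n, y ∈ U ⟨idx k, hk⟩}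
  refine lower hme hl V ?_ ?_ (fun k p => h ⟨idx k, p.1.2.1⟩ k.1 (⟨p.1.1, p.1.2.2⟩, p.2)) ?_ ?_ ?_
  · intro k
    by_cases hk : idx k < n
    · have : V k = U ⟨idx k, hk⟩ := by ext y; simp [V, hk]
      rw [this]; exact hU _
    · have : V k = ∅ := by ext y; simp [V, hk]
      rw [this]; exact isOpen_empty
  · intro y
    obtain ⟨k, hk⟩ := hcov y
    have := k.isLt
    refine ⟨(⟨k / 2, by omega⟩, ⟨k % 2, by omega⟩), ?_⟩
    have hidx : idx (⟨k / 2, by omega⟩, ⟨k % 2, by omega⟩) = k := by simp [idx]; omega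
    refine ⟨by rw [hidx]; exact this, ?_⟩
    convert hk
  · intro k
    by_cases hk : idx k < n
    · have hc : Continuous (fun p : V k × I => (⟨p.1.1, p.1.2.2⟩ : U ⟨idx k, hk⟩)) := by
        rw [continuous_induced_rng]
        have h2 : Continuous (fun p : V k × I => p.1.1) :=
          continuous_subtype_val.comp (continuous_fst (X := V k) (Y := I))
        exact h2
      exact (hh ⟨idx k, hk⟩ k.1).comp (hc.prodMk (continuous_snd (X := V k) (Y := I)))
    · rw [continuous_iff_continuousAt]
      rintro ⟨⟨y, hy⟩, t⟩
      exact absurd hy.1 hk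
  · intro k y
    exact h0 _ _ _
  · intro k y
    exact h1 _ _ _

end lower

section lowerTC

variable {m l : ℕ}

theorem lowerA (hme : Even m) (hl : 1 ≤ l) (n : ℕ) (hn : n ≤ 2 * l)
    (hP : HasBidirPlanners (Fin l → Sph m) 2 n) : False := by
  obtain ⟨U, hU, hcov, -, hs⟩ := hP
  choose s hs1 _ using hs
  let φ : (Fin l × Fin 2 → Sph m) → (Fin 2 → Fin l → Sph m) := fun y e i => y (i, e)
  have hφ : Continuous φ := by fun_prop
  have he0 : evalPt 2 0 = 0 := by ext; simp [evalPt]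
  have he1 : evalPt 2 1 = 1 := by ext; norm_num [evalPt]
  refine lower' hme hl n hn (fun k => φ ⁻¹' U k) (fun k => (hU k).preimage hφ) ?_
    (fun k i p => s k ⟨φ p.1.1, p.1.2⟩ p.2 i) ?_ ?_ ?_
  · intro y
    have : φ y ∈ ⋃ i, U i := by rw [hcov]; trivial
    obtain ⟨k, hk⟩ := mem_iUnion.1 this
    exact ⟨k, hk⟩
  · intro k i
    refine (continuous_apply i).comp ?_
    have h1 : Continuous (fun p : (φ ⁻¹' U k) × I => s k ⟨φ p.1.1, p.1.2⟩) := by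
      refine (s k).continuous.comp (Continuous.subtype_mk ?_ _)
      exact hφ.comp (continuous_subtype_val.comp continuous_fst)
    exact h1.eval continuous_snd
  · intro k i y
    have := hs1 k ⟨φ y.1, y.2⟩ 0
    rw [he0] at this
    exact congrFun this i
  · intro k i y
    have := hs1 k ⟨φ y.1, y.2⟩ 1
    rw [he1] at this
    exact congrFun this i

theorem lowerB (hme : Even m) (hl : 1 ≤ l) (n : ℕ) (hn : n ≤ 2 * l)
    (hP : HasBidirPlanners (Sph m) (2 * l) n) : False := by
  obtain ⟨U, hU, hcov, -, hs⟩ := hP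
  choose s hs1 _ using hs
  let φ : (Fin l × Fin 2 → Sph m) → (Fin (2 * l) → Sph m) := fun y j =>
    y (⟨j / 2, by omega⟩, ⟨j % 2, by omega⟩)
  have hφ : Continuous φ := by fun_prop
  let a : Fin l → ℝ := fun i => evalPt (2 * l) ⟨2 * i, by omega⟩
  let b : Fin l → ℝ := fun i => evalPt (2 * l) ⟨2 * i + 1, by omega⟩
  refine lower' hme hl n hn (fun k => φ ⁻¹' U k) (fun k => (hU k).preimage hφ) ?_
    (fun k i p => s k ⟨φ p.1.1, p.1.2⟩
      (projIcc 0 1 zero_le_one ((1 - (p.2 : ℝ)) * a i + p.2 * b i))) ?_ ?_ ?_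
  · intro y
    have : φ y ∈ ⋃ i, U i := by rw [hcov]; trivial
    obtain ⟨k, hk⟩ := mem_iUnion.1 this
    exact ⟨k, hk⟩
  · intro k i
    have h1 : Continuous (fun p : (φ ⁻¹' U k) × I => s k ⟨φ p.1.1, p.1.2⟩) := by
      refine (s k).continuous.comp (Continuous.subtype_mk ?_ _)
      exact hφ.comp (continuous_subtype_val.comp continuous_fst)
    refine h1.eval (continuous_projIcc.comp ?_)
    fun_prop
  · intro k i y
    have := hs1 k ⟨φ y.1, y.2⟩ ⟨2 * i, by omega⟩
    simp only [Icc.coe_zero, sub_zero, one_mul, zero_mul, add_zero, a, projIcc_val]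
    rw [this]
    simp only [φ]
    congr 1
    ext <;> simp
  · intro k i y
    have := hs1 k ⟨φ y.1, y.2⟩ ⟨2 * i + 1, by omega⟩
    simp only [Icc.coe_one, sub_self, one_mul, zero_mul, zero_add, b, projIcc_val]
    rw [this]
    simp only [φ]
    refine congrArg y.1 ?_
    refine Prod.ext (Fin.ext ?_) (Fin.ext ?_)
    · show (2 * (i : ℕ) + 1) / 2 = i
      omega
    · show (2 * (i : ℕ) + 1) % 2 = 1
      omega

end lowerTC

section contraction

variable {m : ℕ}

/-- The base point. -/
def bpt (m : ℕ) : Sph m := ⟨EuclideanSpace.single 0 1, by simp⟩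

lemma segment_ne_zero {x y : Sph m} (h : x ≠ -y) {s : ℝ} (hs : s ∈ Icc (0:ℝ) 1) :
    (1 - s) • (x : EuclideanSpace ℝ (Fin (m + 1))) + s • (y : EuclideanSpace ℝ (Fin (m + 1))) ≠ 0 := by
  intro h0
  have h1 : (1 - s) • (x : EuclideanSpace ℝ (Fin (m + 1))) =
      - (s • (y : EuclideanSpace ℝ (Fin (m + 1)))) := eq_neg_of_add_eq_zero_left h0
  have h2 := congrArg norm h1
  rw [norm_neg, norm_smul, norm_smul, Real.norm_of_nonneg hs.1,
    Real.norm_of_nonneg (by linarith [hs.2])] at h2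
  simp at h2
  have hs2 : 1 - s = s := h2
  apply h
  apply Subtype.ext
  rw [hs2, ← smul_neg] at h1
  have hs0 : s ≠ 0 := by intro h; rw [h] at hs2; norm_num at hs2
  exact smul_right_injective _ hs0 h1

/-- Contraction of the complement of a point, followed by a path. -/
def ctr (q : ℝ → Sph m) (x : Sph m) (t : I) : Sph m :=
  nrm ((1 - min 1 (2 * (t:ℝ))) • (x : EuclideanSpace ℝ (Fin (m + 1))) +
    min 1 (2 * (t:ℝ)) • (q (max 0 (2 * (t:ℝ) - 1)) : EuclideanSpace ℝ (Fin (m + 1))))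

lemma ctr_zero (q : ℝ → Sph m) (x : Sph m) : ctr q x 0 = x := by
  simp [ctr, nrm_self]

lemma ctr_one (q : ℝ → Sph m) (x : Sph m) : ctr q x 1 = q 1 := by
  unfold ctr
  norm_num [nrm_self]

lemma ctr_continuousOn (q : ℝ → Sph m) (hq : Continuous q) :
    ContinuousOn (fun p : Sph m × I => ctr q p.1 p.2) {p | p.1 ≠ - q 0} := by
  unfold ctr
  refine continuousOn_nrm.comp (f := fun p : Sph m × I =>
    (1 - min 1 (2 * (p.2:ℝ))) • (p.1 : EuclideanSpace ℝ (Fin (m + 1))) +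
    min 1 (2 * (p.2:ℝ)) • (q (max 0 (2 * (p.2:ℝ) - 1)) : EuclideanSpace ℝ (Fin (m + 1)))) ?_ ?_
  · apply Continuous.continuousOn
    fun_prop
  · rintro ⟨x, t⟩ hx
    simp only [mem_ofPred_eq] at hx ⊢
    have ht := t.2
    by_cases h : (t:ℝ) ≤ 1 / 2
    · rw [max_eq_left (by linarith)]
      exact segment_ne_zero hx ⟨le_min zero_le_one (by linarith [ht.1]), min_le_left _ _⟩
    · rw [min_eq_left (by linarith)]
      simp only [sub_self, zero_smul, one_smul, zero_add]
      exact ne_zero_of_mem_unit_sphere _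

/-- The path from the antipode of the base point to the base point. -/
def qA (hm : 2 ≤ m) (s : ℝ) : Sph m :=
  ⟨WithLp.toLp 2 (fun k => if k = 0 then - Real.cos (Real.pi * s) else
    if k = ⟨1, by omega⟩ then Real.sin (Real.pi * s) else 0), by
    rw [mem_sphere_zero_iff_norm, ← sq_eq_sq₀ (norm_nonneg _) zero_le_one,
      EuclideanSpace.real_norm_sq_eq]
    have h01 : (⟨1, by omega⟩ : Fin (m + 1)) ≠ 0 := by
      intro h; have := congrArg Fin.val h; simp at this
    rw [← Finset.sum_subset (Finset.subset_univ {(0 : Fin (m + 1)), ⟨1, by omega⟩})]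
    · rw [Finset.sum_pair h01.symm]
      simp [h01]
    · intro k _ hk
      simp at hk
      simp [hk]⟩

lemma continuous_qA (hm : 2 ≤ m) : Continuous (qA hm) := by
  unfold qA
  refine Continuous.subtype_mk ?_ _
  refine (PiLp.continuous_toLp 2 _).comp (continuous_pi fun k => ?_)
  split_ifs <;> fun_prop

lemma qA_zero (hm : 2 ≤ m) : qA hm 0 = - bpt m := by
  apply Subtype.ext
  ext k
  by_cases hk : k = 0 <;> simp [qA, bpt, hk]

lemma qA_one (hm : 2 ≤ m) : qA hm 1 = bpt m := by
  apply Subtype.ext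
  ext k
  by_cases hk : k = 0 <;> simp [qA, bpt, hk]

end contraction

section strata

variable {m : ℕ} {κ : Type} [Fintype κ] [DecidableEq κ]

/-- Strata. -/
def VI (J : Finset κ) : Set (κ → Sph m) :=
  {x | (∀ i ∈ J, ∀ j ∉ J, (x i).1 0 < (x j).1 0) ∧ (∀ i ∈ J, x i ≠ bpt m) ∧
    (∀ j ∉ J, x j ≠ - bpt m)}

lemma isOpen_VI (J : Finset κ) : IsOpen (VI J : Set (κ → Sph m)) := by
  have : (VI J : Set (κ → Sph m)) = (⋂ i, ⋂ j, {x | i ∈ J → j ∉ J → (x i).1 0 < (x j).1 0}) ∩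
    ((⋂ i, {x | i ∈ J → x i ≠ bpt m}) ∩ (⋂ j, {x | j ∉ J → x j ≠ - bpt m})) := by
    ext x
    simp only [VI, mem_inter_iff, mem_iInter, mem_ofPred_eq]
    tauto
  rw [this]
  have hc : ∀ i, Continuous (fun x : κ → Sph m => (x i).1 0) := by intro i; fun_prop
  refine IsOpen.inter (isOpen_iInter_of_finite fun i => isOpen_iInter_of_finite fun j => ?_)
    (IsOpen.inter (isOpen_iInter_of_finite fun i => ?_) (isOpen_iInter_of_finite fun i => ?_))
  · by_cases hi : i ∈ J
    · by_cases hj : j ∉ J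
      · simpa [hi, hj] using isOpen_lt (hc i) (hc j)
      · simp [hi, not_not.1 hj]
    · simp [hi]
  · by_cases hi : i ∈ J
    · simpa [hi] using isOpen_ne_fun (continuous_apply i) continuous_const
    · simp [hi]
  · by_cases hi : i ∉ J
    · simpa [hi] using isOpen_ne_fun (continuous_apply i) continuous_const
    · simp [hi]

lemma VI_unique {J J' : Finset κ} {x : κ → Sph m} (hJ : x ∈ VI J) (hJ' : x ∈ VI J')
    (hc : J.card = J'.card) : J = J' := by
  by_contra hne
  have h1 : ¬ J ⊆ J' := fun h => hne (Finset.eq_of_subset_of_card_le h hc.ge)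
  have h2 : ¬ J' ⊆ J := fun h => hne (Finset.eq_of_subset_of_card_le h hc.le).symm
  obtain ⟨i, hi, hi'⟩ := Finset.not_subset.1 h1
  obtain ⟨j, hj, hj'⟩ := Finset.not_subset.1 h2
  exact lt_asymm (hJ.1 i hi j hj') (hJ'.1 j hj i hi')

lemma VI_perm (τ : Equiv.Perm κ) {J : Finset κ} {x : κ → Sph m} (h : x ∘ τ ∈ VI J) :
    x ∈ VI (J.map τ.toEmbedding) := by
  obtain ⟨h1, h2, h3⟩ := h
  have hmem : ∀ i, i ∈ J.map τ.toEmbedding ↔ τ.symm i ∈ J := by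
    intro i; simp [Finset.mem_map_equiv]
  refine ⟨fun i hi j hj => ?_, fun i hi => ?_, fun j hj => ?_⟩
  · rw [hmem] at hi hj
    simpa using h1 _ hi _ hj
  · rw [hmem] at hi
    simpa using h2 _ hi
  · rw [hmem] at hj
    simpa using h3 _ hj

/-- The open sets. -/
def VV (κ : Type) [Fintype κ] [DecidableEq κ] (m k : ℕ) : Set (κ → Sph m) :=
  {x | ∃ J : Finset κ, J.card = k ∧ x ∈ VI J}

lemma isOpen_VV (k : ℕ) : IsOpen (VV κ m k) := by
  have : VV κ m k = ⋃ J : Finset κ, ⋃ _ : J.card = k, VI J := by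
    ext x; simp [VV]
  rw [this]
  exact isOpen_iUnion fun J => isOpen_iUnion fun _ => isOpen_VI J

lemma VV_perm (τ : Equiv.Perm κ) {k : ℕ} {x : κ → Sph m} (h : x ∘ τ ∈ VV κ m k) :
    x ∈ VV κ m k := by
  obtain ⟨J, hJ, hx⟩ := h
  exact ⟨_, by rw [Finset.card_map, hJ], VI_perm τ hx⟩

lemma VV_cover (x : κ → Sph m) : ∃ k < Fintype.card κ + 1, x ∈ VV κ m k := by
  refine ⟨(Finset.univ.filter fun i => (x i).1 0 < 0).card, ?_, _, rfl, ?_, ?_, ?_⟩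
  · exact Nat.lt_succ_of_le (Finset.card_le_univ _)
  · intro i hi j hj
    simp at hi hj
    linarith
  · intro i hi h
    have h2 : (x i).1 0 < 0 := by simpa using hi
    rw [h] at h2
    simp [bpt] at h2
    linarith
  · intro j hj h
    have h2 : 0 ≤ (x j).1 0 := by simpa using hj
    rw [h] at h2
    simp [bpt] at h2
    linarith

open Classical in
/-- The local motions to the base point. -/
def alp (hm : 2 ≤ m) (k : ℕ) (x : κ → Sph m) (j : κ) (t : I) : Sph m :=
  if ∃ J : Finset κ, J.card = k ∧ x ∈ VI J ∧ j ∈ J then ctr (qA hm) (x j) t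
  else ctr (fun _ => bpt m) (x j) t

lemma alp_zero (hm : 2 ≤ m) (k : ℕ) (x : κ → Sph m) (j : κ) : alp hm k x j 0 = x j := by
  unfold alp; split_ifs <;> exact ctr_zero _ _

lemma alp_one (hm : 2 ≤ m) (k : ℕ) (x : κ → Sph m) (j : κ) : alp hm k x j 1 = bpt m := by
  unfold alp; split_ifs
  · rw [ctr_one, qA_one]
  · rw [ctr_one]

lemma alp_perm (hm : 2 ≤ m) (k : ℕ) (x : κ → Sph m) (τ : Equiv.Perm κ) (j : κ) (t : I) :
    alp hm k (x ∘ τ) j t = alp hm k x (τ j) t := by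
  have : (∃ J : Finset κ, J.card = k ∧ x ∘ τ ∈ VI J ∧ j ∈ J) ↔
      ∃ J : Finset κ, J.card = k ∧ x ∈ VI J ∧ τ j ∈ J := by
    constructor
    · rintro ⟨J, h1, h2, h3⟩
      exact ⟨_, by rw [Finset.card_map, h1], VI_perm τ h2, by simpa using h3⟩
    · rintro ⟨J, h1, h2, h3⟩
      refine ⟨J.map τ.symm.toEmbedding, by rw [Finset.card_map, h1], VI_perm τ.symm ?_, ?_⟩
      · convert h2
        ext; simp
      · rw [Finset.mem_map_equiv]; simpa using h3
  unfold alp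
  classical
  exact if_congr this rfl rfl

lemma alp_continuous (hm : 2 ≤ m) (k : ℕ) (j : κ) :
    Continuous (fun p : VV κ m k × I => alp hm k p.1.1 j p.2) := by
  rw [continuous_iff_continuousAt]
  rintro ⟨⟨x, J, hJ, hx⟩, t⟩
  have hO : IsOpen {p : VV κ m k × I | p.1.1 ∈ VI J} :=
    (isOpen_VI J).preimage (continuous_subtype_val.comp continuous_fst)
  have hg : Continuous (fun p : VV κ m k × I => (p.1.1 j, p.2)) :=
    ((continuous_apply j).comp (continuous_subtype_val.comp continuous_fst)).prodMk continuous_snd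
  have hmem : ∀ y : κ → Sph m, y ∈ VI J → ((∃ J : Finset κ, J.card = k ∧ y ∈ VI J ∧ j ∈ J) ↔ j ∈ J) := by
    intro y hy
    constructor
    · rintro ⟨J', h1, h2, h3⟩
      rwa [VI_unique hy h2 (hJ.trans h1.symm)]
    · intro h
      exact ⟨J, hJ, hy, h⟩
  have hcon : ContinuousOn (fun p : VV κ m k × I => alp hm k p.1.1 j p.2)
      {p : VV κ m k × I | p.1.1 ∈ VI J} := by
    by_cases hj : j ∈ J
    · refine ContinuousOn.congr ((ctr_continuousOn (qA hm) (continuous_qA hm)).comp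
        hg.continuousOn (s := {p : VV κ m k × I | p.1.1 ∈ VI J}) ?_) ?_
      · intro p hp
        simp only [mem_ofPred_eq, qA_zero, neg_neg]
        exact hp.2.1 j hj
      · intro p hp
        simp only [alp, hmem _ hp, hj, if_true, Function.comp]
    · refine ContinuousOn.congr ((ctr_continuousOn (fun _ => bpt m) continuous_const).comp
        hg.continuousOn (s := {p : VV κ m k × I | p.1.1 ∈ VI J}) ?_) ?_
      · intro p hp
        exact hp.2.2 j hj
      · intro p hp
        simp only [alp, hmem _ hp, hj, if_false, Function.comp]
  exact hcon.continuousAt (hO.mem_nhds hx)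

end strata

section conc

variable {m : ℕ}

/-- Time change near the `j`-th evaluation point. -/
def tch (n : ℕ) (j : Fin n) (t : I) : I :=
  projIcc 0 1 zero_le_one (min 1 (2 * |(t : ℝ) * ((n : ℝ) - 1) - (j : ℕ)|))

lemma continuous_tch (n : ℕ) (j : Fin n) : Continuous (tch n j) := by
  unfold tch
  refine continuous_projIcc.comp ?_
  fun_prop

lemma tch_eq_one {n : ℕ} {j : Fin n} {t : I} (h : 1 / 2 ≤ |(t : ℝ) * ((n : ℝ) - 1) - (j : ℕ)|) :
    tch n j t = 1 := by
  unfold tch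
  rw [min_eq_left (by linarith)]
  exact projIcc_right _

lemma tch_rev {n : ℕ} (j : Fin n) (t : I) : tch n j.rev t = tch n j (unitInterval.symm t) := by
  unfold tch
  congr 3
  rw [Fin.val_rev, unitInterval.coe_symm_eq, ← abs_neg, Nat.cast_sub (by omega)]
  congr 1
  push_cast
  ring

lemma tch_ne {n : ℕ} {i j : Fin n} (hij : i ≠ j) {t : I}
    (h : |(t : ℝ) * ((n : ℝ) - 1) - (j : ℕ)| < 1 / 2) : tch n i t = 1 := by
  apply tch_eq_one
  have h1 : (1 : ℝ) ≤ |((i : ℕ) : ℝ) - ((j : ℕ) : ℝ)| := by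
    have : ((i : ℕ) : ℤ) - ((j : ℕ) : ℤ) ≠ 0 := by
      intro h; apply hij; apply Fin.ext; omega
    have := Int.one_le_abs this
    exact_mod_cast this
  have h2 := abs_sub_abs_le_abs_sub (((i : ℕ) : ℝ) - ((j : ℕ) : ℝ))
    (((i : ℕ) : ℝ) - (t : ℝ) * ((n : ℝ) - 1))
  have h3 : ((i : ℕ) : ℝ) - ((j : ℕ) : ℝ) - (((i : ℕ) : ℝ) - (t : ℝ) * ((n : ℝ) - 1)) =
    (t : ℝ) * ((n : ℝ) - 1) - (j : ℕ) := by ring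
  rw [h3, abs_sub_comm ((i : ℕ) : ℝ) ((t : ℝ) * ((n : ℝ) - 1))] at h2
  linarith

/-- The unnormalized concatenated path. -/
def pre {n : ℕ} (a : Fin n → I → Sph m) (t : I) : EuclideanSpace ℝ (Fin (m + 1)) :=
  (bpt m : EuclideanSpace ℝ (Fin (m + 1))) +
    ∑ j, ((a j (tch n j t) : EuclideanSpace ℝ (Fin (m + 1))) - bpt m)

lemma pre_near {n : ℕ} (a : Fin n → I → Sph m) (ha : ∀ j, a j 1 = bpt m) (t : I) (j : Fin n)
    (h : |(t : ℝ) * ((n : ℝ) - 1) - (j : ℕ)| < 1 / 2) : pre a t = a j (tch n j t) := by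
  unfold pre
  rw [Finset.sum_eq_single j]
  · abel
  · intro i _ hij
    rw [tch_ne hij h, ha, sub_self]
  · simp

lemma pre_mem {n : ℕ} (a : Fin n → I → Sph m) (ha : ∀ j, a j 1 = bpt m) (t : I) :
    ∃ y : Sph m, pre a t = y := by
  by_cases h : ∃ j : Fin n, |(t : ℝ) * ((n : ℝ) - 1) - (j : ℕ)| < 1 / 2
  · obtain ⟨j, hj⟩ := h
    exact ⟨_, pre_near a ha t j hj⟩
  · push Not at h
    refine ⟨bpt m, ?_⟩
    unfold pre
    rw [Finset.sum_eq_zero, add_zero]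
    intro j _
    rw [tch_eq_one (h j), ha, sub_self]

/-- The concatenated path. -/
def conc {n : ℕ} (a : Fin n → I → Sph m) (t : I) : Sph m := nrm (pre a t)

lemma conc_eval {n : ℕ} (hn : 2 ≤ n) (a : Fin n → I → Sph m) (ha : ∀ j, a j 1 = bpt m)
    (j : Fin n) : conc a (evalPt n j) = a j 0 := by
  have hn' : (n : ℝ) - 1 ≠ 0 := by
    have : (2 : ℝ) ≤ n := by exact_mod_cast hn
    intro h; linarith
  have h0 : ((evalPt n j : I) : ℝ) * ((n : ℝ) - 1) - (j : ℕ) = 0 := by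
    simp [evalPt, div_mul_cancel₀ _ hn']
  have ht : tch n j (evalPt n j) = 0 := by
    unfold tch
    rw [h0]
    simp
  unfold conc
  rw [pre_near a ha _ j (by rw [h0]; norm_num), nrm_self, ht]

lemma conc_rev {n : ℕ} (a : Fin n → I → Sph m) (t : I) :
    conc (fun j => a j.rev) t = conc a (unitInterval.symm t) := by
  unfold conc pre
  congr 2
  rw [← Equiv.sum_comp Fin.revPerm]
  apply Finset.sum_congr rfl
  intro j _
  simp [tch_rev]

lemma conc_continuous {W : Type*} [TopologicalSpace W] {n : ℕ} (a : Fin n → W → I → Sph m)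
    (hc : ∀ j, Continuous (fun p : W × I => a j p.1 p.2)) (ha : ∀ j w, a j w 1 = bpt m) :
    Continuous (fun p : W × I => conc (fun j => a j p.1) p.2) := by
  have h1 : Continuous (fun p : W × I => pre (fun j => a j p.1) p.2) := by
    unfold pre
    refine continuous_const.add (continuous_finset_sum _ fun j _ => Continuous.sub ?_ continuous_const)
    refine continuous_subtype_val.comp ?_
    exact (hc j).comp (continuous_fst.prodMk ((continuous_tch n j).comp continuous_snd))
  have h2 : ∀ p : W × I, pre (fun j => a j p.1) p.2 ≠ 0 := by
    intro p
    obtain ⟨y, hy⟩ := pre_mem (fun j => a j p.1) (fun j => ha j _) p.2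
    rw [hy]
    exact ne_zero_of_mem_unit_sphere y
  exact continuousOn_nrm.comp_continuous h1 h2

end conc

section upper

variable {m l : ℕ}

/-- Reversal-permutation for planner B. -/
lemma rtuple_eq {X : Type*} {n : ℕ} (x : Fin n → X) : rtuple x = x ∘ Fin.revPerm := rfl

theorem upperB (hm : 2 ≤ m) (hl : 1 ≤ l) : HasBidirPlanners (Sph m) (2 * l) (2 * l + 1) := by
  have hrr : ∀ x : Fin (2 * l) → Sph m, (rtuple x) ∘ (Fin.revPerm : Equiv.Perm (Fin (2 * l))) = x := by
    intro x; ext j; simp [rtuple]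
  refine ⟨fun k => VV (Fin (2 * l)) m k, fun k => isOpen_VV _, ?_, ?_, ?_⟩
  · rw [eq_univ_iff_forall]
    intro x
    obtain ⟨k, hk, hx⟩ := VV_cover x
    rw [Fintype.card_fin] at hk
    exact mem_iUnion.2 ⟨⟨k, hk⟩, hx⟩
  · intro k x hx
    refine VV_perm (Fin.revPerm) ?_
    rw [hrr]; exact hx
  · intro k
    let F : C(VV (Fin (2 * l)) m k × I, Sph m) :=
      ⟨fun p => conc (fun j => alp hm k p.1.1 j) p.2,
        conc_continuous (W := VV (Fin (2 * l)) m k) (fun j w => alp hm k w.1 j)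
          (fun j => alp_continuous hm k j) (fun j w => alp_one hm k w.1 j)⟩
    refine ⟨F.curry, ?_, ?_⟩
    · intro x j
      show conc (fun j => alp hm k x.1 j) (evalPt (2 * l) j) = x.1 j
      rw [conc_eval (by omega) _ (fun j => alp_one hm k x.1 j), alp_zero]
    · intro x hx
      ext1 t
      show conc (fun j => alp hm k (rtuple x.1) j) t =
        conc (fun j => alp hm k x.1 j) (unitInterval.symm t)
      rw [← conc_rev]
      congr 1
      ext j s : 2
      exact alp_perm hm k x.1 Fin.revPerm j s

theorem upperA (hm : 2 ≤ m) : HasBidirPlanners (Fin l → Sph m) 2 (2 * l + 1) := by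
  let unc : (Fin 2 → Fin l → Sph m) → (Fin 2 × Fin l → Sph m) := fun x p => x p.1 p.2
  have hunc : Continuous unc := by fun_prop
  let τ : Equiv.Perm (Fin 2 × Fin l) := Equiv.prodCongr Fin.revPerm (Equiv.refl _)
  have hrt : ∀ x, unc (rtuple x) = unc x ∘ τ := by
    intro x; rfl
  have hrr : ∀ x, unc (rtuple x) ∘ τ = unc x := by
    intro x; ext p; simp [rtuple, unc, τ]
  refine ⟨fun k => unc ⁻¹' VV (Fin 2 × Fin l) m k, fun k => (isOpen_VV _).preimage hunc, ?_, ?_, ?_⟩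
  · rw [eq_univ_iff_forall]
    intro x
    obtain ⟨k, hk, hx⟩ := VV_cover (unc x)
    simp only [Fintype.card_prod, Fintype.card_fin] at hk
    exact mem_iUnion.2 ⟨⟨k, hk⟩, hx⟩
  · intro k x hx
    refine VV_perm τ (x := unc (rtuple x)) ?_
    rw [hrr]; exact hx
  · intro k
    have hF : Continuous (fun p : (unc ⁻¹' VV (Fin 2 × Fin l) m k) × I =>
        fun i : Fin l => conc (fun e : Fin 2 => alp hm k (unc p.1.1) (e, i)) p.2) := by
      refine continuous_pi fun i => ?_
      refine conc_continuous (W := unc ⁻¹' VV (Fin 2 × Fin l) m k)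
        (fun e w => alp hm k (unc w.1) (e, i)) (fun e => ?_) (fun e w => alp_one hm k _ _)
      have hg : Continuous (fun p : (unc ⁻¹' VV (Fin 2 × Fin l) m k) × I =>
          ((⟨unc p.1.1, p.1.2⟩ : VV (Fin 2 × Fin l) m k), p.2)) := by
        refine Continuous.prodMk ?_ continuous_snd
        refine Continuous.subtype_mk ?_ _
        exact hunc.comp (continuous_subtype_val.comp continuous_fst)
      exact (alp_continuous hm k (e, i)).comp hg
    let F : C((unc ⁻¹' VV (Fin 2 × Fin l) m k) × I, Fin l → Sph m) := ⟨_, hF⟩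
    refine ⟨F.curry, ?_, ?_⟩
    · intro x j
      ext1 i
      show conc (fun e : Fin 2 => alp hm k (unc x.1) (e, i)) (evalPt 2 j) = x.1 j i
      rw [conc_eval le_rfl _ (fun e => alp_one hm k _ _), alp_zero]
    · intro x hx
      ext1 t
      ext1 i
      show conc (fun e : Fin 2 => alp hm k (unc (rtuple x.1)) (e, i)) t =
        conc (fun e : Fin 2 => alp hm k (unc x.1) (e, i)) (unitInterval.symm t)
      rw [← conc_rev]
      congr 1
      ext e s : 2
      rw [hrt]
      exact alp_perm hm k (unc x.1) τ (e, i) s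

lemma TCbeta_eq {X : Type*} [TopologicalSpace X] {n N : ℕ} (hu : HasBidirPlanners X n (N + 1))
    (hlow : ∀ k, k ≤ N → HasBidirPlanners X n k → False) : TCbeta X n = ((N + 1 : ℕ) : ℕ∞) := by
  apply le_antisymm
  · exact sInf_le ⟨_, rfl, hu⟩
  · apply le_sInf
    rintro _ ⟨k, rfl, hk⟩
    by_contra hcon
    have : k < N + 1 := by
      rw [not_le] at hcon
      exact_mod_cast hcon
    exact hlow k (by omega) hk

end upper

end

end SphTC

/-- For every even `m ≥ 2` and every `l ≥ 1`,
`TC^Σ_2((S^m)^l) = 2l + 1` and `TC^β_{2l}(S^m) = 2l + 1`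
(with `TC^Σ_2(Y) = TC^β_2(Y)` the swap-equivariant sectional number of `e_2`). -/
theorem TCsym2_sphere_pow_and_TCbeta (m l : ℕ) (hm : 2 ≤ m) (hme : Even m) (hl : 1 ≤ l) :
    TCbeta (Fin l → Sph m) 2 = ((2 * l + 1 : ℕ) : ℕ∞) ∧
    TCbeta (Sph m) (2 * l) = ((2 * l + 1 : ℕ) : ℕ∞) :=
  ⟨SphTC.TCbeta_eq (SphTC.upperA hm) (fun k hk h => SphTC.lowerA hme hl k hk h),
    SphTC.TCbeta_eq (SphTC.upperB hm hl) (fun k hk h => SphTC.lowerB hme hl k hk h)⟩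
end

section
/- For every path-connected topological space X, the map c : X → C(I,X)/β, sending a point x to the equivalence class of the constant path at x, is a homotopy equivalence, where C(I,X)/β is the quotient of the free path space by the path-reversal involution (β·γ)(t) = γ(1−t), with the quotient topology. -/
open unitInterval

noncomputable section

/-- The setoid on `C(I,X)` identifying each path with its reverse. -/
def pathRevSetoid (X : Type*) [TopologicalSpace X] : Setoid C(unitInterval, X) where
  r γ δ := γ = δ ∨ γ = rpath δ
  iseqv := by
    constructor
    · intro γ; exact Or.inl rfl
    · intro γ δ h
      rcases h with h | h
      · exact Or.inl h.symm
      · refine Or.inr ?_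
        subst h
        ext t
        simp [rpath]
    · intro γ δ η h1 h2
      rcases h1 with h1 | h1 <;> rcases h2 with h2 | h2
      · exact Or.inl (h1.trans h2)
      · exact Or.inr (h1.trans h2)
      · subst h1 h2; exact Or.inr rfl
      · subst h1 h2
        refine Or.inl ?_
        ext t
        simp [rpath]

/-- The quotient `C(I,X)/β` of the free path space by path reversal. -/
def PathQuot (X : Type*) [TopologicalSpace X] : Type _ := Quotient (pathRevSetoid X)

instance (X : Type*) [TopologicalSpace X] : TopologicalSpace (PathQuot X) :=
  instTopologicalSpaceQuotient

/-- The setoid on `Y × Y` identifying a pair with its swap. -/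
def swapSetoid (Y : Type*) : Setoid (Y × Y) where
  r p q := p = q ∨ p = Prod.swap q
  iseqv := by
    constructor
    · intro p; exact Or.inl rfl
    · intro p q h
      rcases h with h | h
      · exact Or.inl h.symm
      · exact Or.inr (by rw [h, Prod.swap_swap])
    · intro p q u h1 h2
      rcases h1 with h1 | h1 <;> rcases h2 with h2 | h2
      · exact Or.inl (h1.trans h2)
      · exact Or.inr (h1.trans h2)
      · subst h1 h2; exact Or.inr rfl
      · subst h1 h2; exact Or.inl (Prod.swap_swap _)

/-- The second symmetric product `SP²(Y)`, the quotient of `Y × Y` by the swap involution. -/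
def SP2 (Y : Type*) [TopologicalSpace Y] : Type _ := Quotient (swapSetoid Y)

instance (Y : Type*) [TopologicalSpace Y] : TopologicalSpace (SP2 Y) :=
  instTopologicalSpaceQuotient

/-- The map `φ : (X^l)² → X^{2l}`,
`φ(x_1,…,x_{2l}) = (x_l,…,x_1,x_{l+1},…,x_{2l})`. -/
def phiMap {X : Type*} (l : ℕ) (p : (Fin l → X) × (Fin l → X)) : Fin (2 * l) → X :=
  fun j =>
    if h : (j : ℕ) < l then p.1 ⟨l - 1 - (j : ℕ), by omega⟩
    else p.2 ⟨(j : ℕ) - l, by have := j.isLt; omega⟩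

/-- The north pole `N = (0,…,0,1)` of `S^n`. -/
def northPole (n : ℕ) : Sph n :=
  ⟨EuclideanSpace.single (Fin.last n) (1 : ℝ), by
    simp [mem_sphere_zero_iff_norm, EuclideanSpace.norm_single]⟩

/-- The south pole `S = (0,…,0,-1)` of `S^n`. -/
def southPole (n : ℕ) : Sph n :=
  ⟨EuclideanSpace.single (Fin.last n) (-1 : ℝ), by
    simp [mem_sphere_zero_iff_norm, EuclideanSpace.norm_single]⟩

/-- The open upper hemisphere `D_+ = {x ∈ S^n : x_{n+1} > 0}`. -/
def upperHemi (n : ℕ) : Set (Sph n) :=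
  {x | 0 < (x : EuclideanSpace ℝ (Fin (n + 1))) (Fin.last n)}

/-- The open lower hemisphere `D_- = {x ∈ S^n : x_{n+1} < 0}`. -/
def lowerHemi (n : ℕ) : Set (Sph n) :=
  {x | (x : EuclideanSpace ℝ (Fin (n + 1))) (Fin.last n) < 0}

/-- The affine contraction of the interval towards its midpoint. -/
def midContr (p : unitInterval × unitInterval) : unitInterval :=
  ⟨(1 - (p.1 : ℝ)) / 2 + p.1 * p.2, by
    obtain ⟨⟨s, hs0, hs1⟩, ⟨t, ht0, ht1⟩⟩ := p
    constructor
    · show 0 ≤ (1 - s) / 2 + s * t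
      nlinarith [mul_nonneg hs0 ht0]
    · show (1 - s) / 2 + s * t ≤ 1
      nlinarith [mul_nonneg hs0 (sub_nonneg.2 ht1)]⟩

theorem continuous_midContr : Continuous midContr := by
  unfold midContr
  fun_prop

theorem midContr_symm (s t : unitInterval) :
    midContr (s, unitInterval.symm t) = unitInterval.symm (midContr (s, t)) := by
  apply Subtype.ext
  simp only [midContr, unitInterval.coe_symm_eq]
  ring

theorem midContr_one (t : unitInterval) : midContr (1, t) = t := by
  apply Subtype.ext
  simp [midContr]

/-- The midpoint. -/
def midPt : unitInterval := midContr (0, 0)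

theorem midContr_zero (t : unitInterval) : midContr (0, t) = midPt := by
  apply Subtype.ext
  simp [midPt, midContr]

theorem midPt_symm : unitInterval.symm midPt = midPt := by
  rw [midPt, ← midContr_symm, midContr_zero, midContr_zero]

/-- `γ` restricted to the shrunken interval around the midpoint. -/
def shrinkPath {X : Type*} [TopologicalSpace X] (p : unitInterval × C(unitInterval, X)) :
    C(unitInterval, X) :=
  p.2.comp ⟨fun t => midContr (p.1, t), continuous_midContr.comp (by fun_prop)⟩

theorem continuous_shrinkPath {X : Type*} [TopologicalSpace X] :
    Continuous (shrinkPath (X := X)) := by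
  apply ContinuousMap.continuous_of_continuous_uncurry
  show Continuous fun q : (unitInterval × C(unitInterval, X)) × unitInterval =>
    q.1.2 (midContr (q.1.1, q.2))
  have := continuous_midContr
  fun_prop

theorem shrinkPath_rpath {X : Type*} [TopologicalSpace X] (s : unitInterval)
    (γ : C(unitInterval, X)) : shrinkPath (s, rpath γ) = rpath (shrinkPath (s, γ)) := by
  ext t
  simp [shrinkPath, rpath, midContr_symm]

/-- The contraction on the quotient. -/
def shrinkQuot {X : Type*} [TopologicalSpace X] (p : unitInterval × PathQuot X) : PathQuot X :=
  Quotient.lift (s := pathRevSetoid X)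
    (fun γ => (Quotient.mk (pathRevSetoid X) (shrinkPath (p.1, γ)) : PathQuot X))
    (by
      rintro γ δ (h | h)
      · rw [h]
      · rw [h]
        exact Quotient.sound (Or.inr (shrinkPath_rpath _ _))) p.2

theorem continuous_quotMk {X : Type*} [TopologicalSpace X] :
    Continuous (fun γ : C(unitInterval, X) => (Quotient.mk (pathRevSetoid X) γ : PathQuot X)) :=
  continuous_quotient_mk'

theorem continuous_shrinkQuot {X : Type*} [TopologicalSpace X] :
    Continuous (shrinkQuot (X := X)) := by
  have hq : Topology.IsQuotientMap
      (fun γ : C(unitInterval, X) => (Quotient.mk (pathRevSetoid X) γ : PathQuot X)) :=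
    isQuotientMap_quotient_mk'
  refine hq.continuous_lift_prod_right ?_
  exact continuous_quotMk.comp continuous_shrinkPath

/-- Midpoint evaluation on the quotient. -/
def midEval {X : Type*} [TopologicalSpace X] : C(PathQuot X, X) where
  toFun := Quotient.lift (s := pathRevSetoid X) (fun γ => γ midPt) (by
      rintro γ δ (h | h)
      · rw [h]
      · rw [h]
        simp [rpath, midPt_symm])
  continuous_toFun := Continuous.quotient_lift (by fun_prop) _

/-- The constant path map. -/
def constQuot {X : Type*} [TopologicalSpace X] : C(X, PathQuot X) where
  toFun x := Quotient.mk (pathRevSetoid X) (ContinuousMap.const unitInterval x)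
  continuous_toFun := continuous_quotMk.comp ContinuousMap.continuous_const'

end

/-- For every path-connected space `X`, the map
`c : X → C(I,X)/β` sending `x` to the class of the constant path at `x` is
a homotopy equivalence. -/
theorem const_path_quotient_homotopy_equiv (X : Type*) [TopologicalSpace X]
    [PathConnectedSpace X] :
    ∃ h : ContinuousMap.HomotopyEquiv X (PathQuot X),
      ∀ x : X, h.toFun x =
        Quotient.mk (pathRevSetoid X) (ContinuousMap.const unitInterval x) := by
  refine ⟨⟨constQuot, midEval, ?_, ?_⟩, fun x => rfl⟩
  · have : midEval.comp constQuot = ContinuousMap.id X := by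
      ext x
      rfl
    rw [this]
  · refine ⟨⟨⟨shrinkQuot, continuous_shrinkQuot⟩, ?_, ?_⟩⟩
    · intro q
      induction q using Quotient.inductionOn with
      | h γ =>
        refine congrArg (Quotient.mk (pathRevSetoid X)) ?_
        ext t
        exact congrArg γ (midContr_zero t)
    · intro q
      induction q using Quotient.inductionOn with
      | h γ =>
        refine congrArg (Quotient.mk (pathRevSetoid X)) ?_
        ext t
        exact congrArg γ (midContr_one t)
end
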